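/- arXiv:1506.02572 — 2 statements merged into one kernel-verified Lean document; each statement's English description precedes it below -/
import Mathlib

section
/- Let ω = π/2 and let O be a convex polygon with at least 5 vertices, all of whose interior angles are strictly greater than π/2 (no narrow vertices). Let (q, d₁) be a valid π/2-probe of O with closest contact points v₁ on its arm H₁ and v₂ on its arm H₂. Let (q', d₁') be a valid π/2-probe of O along the directed line through v₁ and v₂ directed from v₁ to v₂, with closest contact points v₃ on its arm H₁' and v₄ on its arm H₂', and suppose v₃ ∉ {v₁, v₂} and v₄ ∉ {v₁, v₂}. Then the segment joining v₃ and v₂ is not an edge of O. -/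
open Real EuclideanGeometry

noncomputable section

abbrev Plane := EuclideanSpace ℝ (Fin 2)

/-- Counterclockwise rotation of a vector of the plane by angle `θ`. -/
def rot (θ : ℝ) (d : Plane) : Plane :=
  (WithLp.equiv 2 (Fin 2 → ℝ)).symm
    ![Real.cos θ * d 0 - Real.sin θ * d 1, Real.sin θ * d 0 + Real.cos θ * d 1]

/-- A convex polygon: the convex hull of at least 3 points in strictly convex position;
the points are the vertices. -/
structure ConvexPolygon where
  verts : Finset Plane
  three_le_card : 3 ≤ verts.card
  strictConvexPos : ∀ v ∈ verts, v ∉ convexHull ℝ ((verts : Set Plane) \ {v})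

/-- The polygon as a subset of the plane. -/
def ConvexPolygon.body (O : ConvexPolygon) : Set Plane :=
  convexHull ℝ (O.verts : Set Plane)

/-- `x` and `y` are adjacent vertices of `O` (the segment joining them is an edge of `O`). -/
def ConvexPolygon.Adj (O : ConvexPolygon) (x y : Plane) : Prop :=
  x ∈ O.verts ∧ y ∈ O.verts ∧ x ≠ y ∧ segment ℝ x y ⊆ frontier O.body

/-- The interior angle of `O` at a vertex `v`: the angle `∠ u v w` where `u` and `w` are
the two vertices adjacent to `v`. -/
def ConvexPolygon.intAngle (O : ConvexPolygon) (v : Plane) : ℝ :=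
  sSup {θ | ∃ u w, O.Adj v u ∧ O.Adj v w ∧ u ≠ w ∧ θ = ∠ u v w}

/-- A narrow vertex: a vertex whose interior angle is at most `ω`. -/
def ConvexPolygon.IsNarrow (O : ConvexPolygon) (ω : ℝ) (v : Plane) : Prop :=
  v ∈ O.verts ∧ O.intAngle v ≤ ω

/-- `O` is a rectangle: exactly 4 vertices, all interior angles `π/2`. -/
def ConvexPolygon.IsRectangle (O : ConvexPolygon) : Prop :=
  O.verts.card = 4 ∧ ∀ v ∈ O.verts, O.intAngle v = Real.pi / 2

/-- The `ω`-wedge with apex `q` and first arm direction `d`. -/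
def wedge (ω : ℝ) (q d : Plane) : Set Plane :=
  {x | ∃ s t : ℝ, 0 ≤ s ∧ 0 ≤ t ∧ x = q + s • d + t • rot ω d}

/-- The first arm of a wedge: the ray from `q` in direction `d`. -/
def arm1 (q d : Plane) : Set Plane := {x | ∃ t : ℝ, 0 ≤ t ∧ x = q + t • d}

/-- The second arm of an `ω`-wedge: the ray from `q` in direction `rot ω d`. -/
def arm2 (ω : ℝ) (q d : Plane) : Set Plane := arm1 q (rot ω d)

/-- `(q, d)` is a valid `ω`-probe of `O`: a wedge with unit arm direction containing `O`,
each of whose arms meets `O`. -/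
def IsValidProbe (ω : ℝ) (O : ConvexPolygon) (q d : Plane) : Prop :=
  ‖d‖ = 1 ∧ O.body ⊆ wedge ω q d ∧
    (arm1 q d ∩ O.body).Nonempty ∧ (arm2 ω q d ∩ O.body).Nonempty

/-- A directed line: a point together with a unit direction. -/
structure DirLine where
  pt : Plane
  dir : Plane
  norm_dir : ‖dir‖ = 1

/-- Membership of a point in a directed line. -/
def DirLine.mem (L : DirLine) (x : Plane) : Prop := ∃ t : ℝ, x = L.pt + t • L.dir

/-- A valid `ω`-probe of `O` along the directed line `L`. -/
def IsValidProbeAlong (ω : ℝ) (O : ConvexPolygon) (L : DirLine) (q d : Plane) : Prop :=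
  IsValidProbe ω O q d ∧ L.mem q ∧ ∃ t : ℝ, 0 ≤ t ∧ q + t • L.dir ∈ O.body

/-- `p` is the point of `A` closest to `q`. -/
def ClosestOn (q : Plane) (A : Set Plane) (p : Plane) : Prop :=
  p ∈ A ∧ ∀ x ∈ A, dist q p ≤ dist q x


/-- planar cross product -/
def crs (a b : Plane) : ℝ := a 0 * b 1 - a 1 * b 0

theorem exists_smul_of_crs_eq_zero (a b : Plane) (ha : a ≠ 0) (h : crs a b = 0) :
    ∃ k : ℝ, b = k • a := by
  unfold crs at h
  by_cases h0 : a 0 = 0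
  · have h1 : a 1 ≠ 0 := by
      intro h1
      apply ha
      ext i
      fin_cases i <;> simp [h0, h1]
    refine ⟨b 1 / a 1, ?_⟩
    have hb : b 0 = 0 := by
      rw [h0] at h
      have : a 1 * b 0 = 0 := by linarith
      rcases mul_eq_zero.1 this with h2 | h2
      · exact absurd h2 h1
      · exact h2
    ext i
    fin_cases i
    · simp [h0, hb]
    · simp [h1]
  · refine ⟨b 0 / a 0, ?_⟩
    ext i
    fin_cases i
    · simp [h0]
    · simp
      field_simp
      linarith

theorem wbtw_contra (O : ConvexPolygon) (x y z : Plane) (hx : x ∈ O.verts) (hy : y ∈ O.verts)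
    (hz : z ∈ O.verts) (hxy : x ≠ y) (hzy : z ≠ y) (h : Wbtw ℝ x y z) : False := by
  apply O.strictConvexPos y hy
  have h1 : y ∈ segment ℝ x z := mem_segment_iff_wbtw.2 h
  refine (convex_convexHull ℝ _).segment_subset ?_ ?_ h1
  · exact subset_convexHull ℝ _ ⟨hx, hxy⟩
  · exact subset_convexHull ℝ _ ⟨hz, hzy⟩

theorem crs_ne_zero (O : ConvexPolygon) (v x y : Plane) (hv : v ∈ O.verts) (hx : x ∈ O.verts)
    (hy : y ∈ O.verts) (hvx : v ≠ x) (hvy : v ≠ y) (hxy : x ≠ y) : crs (x - v) (y - v) ≠ 0 := by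
  intro h
  obtain ⟨k, hk⟩ := exists_smul_of_crs_eq_zero _ _ (sub_ne_zero.2 hvx.symm) h
  have hc : Collinear ℝ ({v, x, y} : Set Plane) := by
    rw [collinear_iff_of_mem (p₀ := v) (by simp)]
    refine ⟨x - v, ?_⟩
    intro p hp
    rcases hp with rfl | rfl | rfl
    · exact ⟨0, by simp⟩
    · exact ⟨1, by simp⟩
    · exact ⟨k, by rw [← hk]; simp⟩
  rcases hc.wbtw_or_wbtw_or_wbtw with h | h | h
  · exact wbtw_contra O v x y hv hx hy hvx hxy.symm h
  · exact wbtw_contra O x y v hx hy hv hxy hvy h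
  · exact wbtw_contra O y v x hy hv hx hvy.symm hvx.symm h

theorem interior_nonempty' (S : Set Plane) (hS : Convex ℝ S) (x y p : Plane) (hx : x ∈ S)
    (hy : y ∈ S) (hp : p ∈ S) (h : crs (y - x) (p - x) ≠ 0) : (interior S).Nonempty := by
  rw [hS.interior_nonempty_iff_affineSpan_eq_top]
  rw [eq_top_iff]
  intro z _
  have hx' := subset_affineSpan ℝ S hx
  have hy' := subset_affineSpan ℝ S hy
  have hp' := subset_affineSpan ℝ S hp
  have key : z = (crs (z - x) (p - x) / crs (y - x) (p - x)) • (y - x) +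
      ((crs (y - x) (z - x) / crs (y - x) (p - x)) • (p - x) + x) := by
    set c := crs (y - x) (p - x) with hc
    ext i
    fin_cases i
    · simp
      field_simp
      simp [hc, crs]
      ring
    · simp
      field_simp
      simp [hc, crs]
      ring
  rw [key]
  have m1 := AffineSubspace.smul_vsub_vadd_mem (affineSpan ℝ S)
    (crs (y - x) (z - x) / crs (y - x) (p - x)) hp' hx' hx'
  exact AffineSubspace.smul_vsub_vadd_mem (affineSpan ℝ S)
    (crs (z - x) (p - x) / crs (y - x) (p - x)) hy' hx' m1

theorem adj_support (O : ConvexPolygon) (x y : Plane) (h : O.Adj x y) :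
    (∀ p ∈ O.body, 0 ≤ crs (y - x) (p - x)) ∨ (∀ p ∈ O.body, crs (y - x) (p - x) ≤ 0) := by
  obtain ⟨hx, hy, hxy, hseg⟩ := h
  have hcv : Convex ℝ O.body := convex_convexHull ℝ _
  have hxb : x ∈ O.body := subset_convexHull ℝ _ hx
  have hyb : y ∈ O.body := subset_convexHull ℝ _ hy
  by_cases hall : ∀ p ∈ O.body, crs (y - x) (p - x) = 0
  · left
    intro p hp
    exact (hall p hp).ge
  push Not at hall
  obtain ⟨p0, hp0, hne⟩ := hall
  have hint := interior_nonempty' O.body hcv x y p0 hxb hyb hp0 hne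
  have hm : midpoint ℝ x y ∈ frontier O.body := hseg (midpoint_mem_segment x y)
  have hm' : midpoint ℝ x y ∉ interior O.body := fun hh => hm.2 hh
  obtain ⟨f, hf⟩ := geometric_hahn_banach_open_point hcv.interior isOpen_interior hm'
  have hle : ∀ p ∈ O.body, f p ≤ f (midpoint ℝ x y) := by
    intro p hp
    have hcl : p ∈ closure (interior O.body) := by
      rw [hcv.closure_interior_eq_closure_of_nonempty_interior hint]
      exact subset_closure hp
    have hsub : closure (interior O.body) ⊆ {z | f z ≤ f (midpoint ℝ x y)} := by
      apply closure_minimal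
      · intro z hz
        exact (hf z hz).le
      · exact isClosed_le f.continuous continuous_const
    exact hsub hcl
  have hmid : f (midpoint ℝ x y) = (f x + f y) / 2 := by
    rw [midpoint_eq_smul_add, map_smul, map_add]
    simp
    ring
  have h1 := hle x hxb
  have h2 := hle y hyb
  have hfx : f x = f y := by linarith
  have hrep : ∀ z : Plane, f z = f (EuclideanSpace.single 0 1) * z 0 +
      f (EuclideanSpace.single 1 1) * z 1 := by
    intro z
    have : z = z 0 • (EuclideanSpace.single 0 1 : Plane) + z 1 • EuclideanSpace.single 1 1 := by
      ext i
      fin_cases i <;> simp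
    conv_lhs => rw [this]
    rw [map_add, map_smul, map_smul]
    simp
    ring
  set α := f (EuclideanSpace.single 0 1)
  set β := f (EuclideanSpace.single 1 1)
  have hpos : 0 < α ^ 2 + β ^ 2 := by
    by_contra hcon
    have ha : α = 0 := by nlinarith [sq_nonneg α, sq_nonneg β]
    have hb : β = 0 := by nlinarith [sq_nonneg α, sq_nonneg β]
    obtain ⟨z, hz⟩ := hint
    have := hf z hz
    rw [hrep z, hrep, ha, hb] at this
    simp at this
  have hD : α * (y 0 - x 0) + β * (y 1 - x 1) = 0 := by
    have e1 := hrep x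
    have e2 := hrep y
    linarith
  have hcr : ∀ p ∈ O.body, ∃ g, g ≤ 0 ∧ (α ^ 2 + β ^ 2) * crs (y - x) (p - x) =
      (β * (y 0 - x 0) - α * (y 1 - x 1)) * g := by
    intro p hp
    refine ⟨f p - f x, by have := hle p hp; linarith, ?_⟩
    rw [hrep p, hrep x]
    simp only [crs, PiLp.sub_apply]
    linear_combination (α * (p 1 - x 1) - β * (p 0 - x 0)) * hD
  rcases le_total 0 (β * (y 0 - x 0) - α * (y 1 - x 1)) with hk | hk
  · right
    intro p hp
    obtain ⟨g, hg, e⟩ := hcr p hp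
    by_contra hcon
    push Not at hcon
    nlinarith [mul_pos hpos hcon, mul_nonneg hk (neg_nonneg.2 hg)]
  · left
    intro p hp
    obtain ⟨g, hg, e⟩ := hcr p hp
    by_contra hcon
    push Not at hcon
    nlinarith [mul_pos hpos (neg_pos.2 hcon), mul_nonneg (neg_nonneg.2 hk) (neg_nonneg.2 hg)]

theorem Adj.symm' {O : ConvexPolygon} {x y : Plane} (h : O.Adj x y) : O.Adj y x := by
  obtain ⟨hx, hy, hxy, hs⟩ := h
  exact ⟨hy, hx, hxy.symm, by rwa [segment_symm]⟩

theorem no_three (O : ConvexPolygon) (v x y z : Plane) (hx : O.Adj v x) (hy : O.Adj v y)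
    (hz : O.Adj v z) (hxy : x ≠ y) (hxz : x ≠ z) (hyz : y ≠ z) : False := by
  have n1 := crs_ne_zero O v x y hx.1 hx.2.1 hy.2.1 hx.2.2.1 hy.2.2.1 hxy
  have n2 := crs_ne_zero O v x z hx.1 hx.2.1 hz.2.1 hx.2.2.1 hz.2.2.1 hxz
  have n3 := crs_ne_zero O v y z hx.1 hy.2.1 hz.2.1 hy.2.2.1 hz.2.2.1 hyz
  have bx : x ∈ O.body := subset_convexHull ℝ _ hx.2.1
  have bY : y ∈ O.body := subset_convexHull ℝ _ hy.2.1
  have bz : z ∈ O.body := subset_convexHull ℝ _ hz.2.1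
  have anti : ∀ a b : Plane, crs b a = - crs a b := by
    intro a b
    unfold crs
    ring
  have a1 := anti (x - v) (y - v)
  have a2 := anti (x - v) (z - v)
  have a3 := anti (y - v) (z - v)
  have two : ∀ c : ℝ, 0 ≤ c → 0 ≤ -c → c = 0 := fun c h1 h2 => by linarith
  have two' : ∀ c : ℝ, c ≤ 0 → -c ≤ 0 → c = 0 := fun c h1 h2 => by linarith
  rcases adj_support O v x hx with sx | sx <;> rcases adj_support O v y hy with sy | sy <;>
    rcases adj_support O v z hz with sz | sz
  · exact n1 (two _ (sx y bY) (a1 ▸ sy x bx))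
  · exact n1 (two _ (sx y bY) (a1 ▸ sy x bx))
  · exact n2 (two _ (sx z bz) (a2 ▸ sz x bx))
  · exact n3 (two' _ (sy z bz) (a3 ▸ sz y bY))
  · exact n3 (two _ (sy z bz) (a3 ▸ sz y bY))
  · exact n2 (two' _ (sx z bz) (a2 ▸ sz x bx))
  · exact n1 (two' _ (sx y bY) (a1 ▸ sy x bx))
  · exact n1 (two' _ (sx y bY) (a1 ▸ sy x bx))

/-- At a vertex with obtuse interior angle, with a known neighbour `x`, there is another point
of the body at an obtuse angle. -/
theorem obtuse_nbr (O : ConvexPolygon) (v x : Plane) (h : Real.pi / 2 < O.intAngle v)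
    (hx : O.Adj v x) : ∃ n ∈ O.body,
      (x 0 - v 0) * (n 0 - v 0) + (x 1 - v 1) * (n 1 - v 1) < 0 := by
  have hang : ∀ u w : Plane, Real.pi / 2 < ∠ u v w →
      (u 0 - v 0) * (w 0 - v 0) + (u 1 - v 1) * (w 1 - v 1) < 0 := by
    intro u w hh
    have h1 : inner ℝ (u -ᵥ v) (w -ᵥ v) < 0 := by
      by_contra hcon
      push Not at hcon
      have h2 : EuclideanGeometry.angle u v w ≤ Real.pi / 2 := by
        unfold EuclideanGeometry.angle InnerProductGeometry.angle
        rw [Real.arccos_le_pi_div_two]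
        exact div_nonneg hcon (by positivity)
      linarith
    simp [PiLp.inner_apply, Fin.sum_univ_two] at h1
    linarith
  unfold ConvexPolygon.intAngle at h
  have hne : {θ | ∃ u w, O.Adj v u ∧ O.Adj v w ∧ u ≠ w ∧ θ = ∠ u v w}.Nonempty := by
    by_contra hcon
    rw [Set.not_nonempty_iff_eq_empty] at hcon
    rw [hcon, Real.sSup_empty] at h
    linarith [Real.pi_pos]
  obtain ⟨θ, ⟨u, w, hu, hw, huw, rfl⟩, hθ⟩ := exists_lt_of_lt_csSup hne h
  have hin := hang u w hθ
  by_cases h1 : x = u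
  · subst h1
    exact ⟨w, subset_convexHull ℝ _ hw.2.1, hin⟩
  by_cases h2 : x = w
  · subst h2
    exact ⟨u, subset_convexHull ℝ _ hu.2.1, by linarith⟩
  exact (no_three O v x u w hx hu hw h1 h2 huw).elim

/-- The final contradiction, in coordinates. -/
theorem core (b X Y w1 w2 n0 n1 m0 m1 : ℝ) (hX : 0 < X) (hw1 : 0 < w1) (hw2 : 0 < w2)
    (hn0 : 0 ≤ n0)
    (hn : X * n0 + (Y - b) * (n1 - b) < 0)
    (hnl : 0 ≤ (-X) * (n1 - b) - (b - Y) * n0)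
    (hm : (-X) * (m0 - X) + (b - Y) * (m1 - Y) < 0)
    (hml : 0 ≤ (-X) * (m1 - Y) - (b - Y) * (m0 - X))
    (hmw : 0 ≤ w1 * (m1 - Y) - w2 * (m0 - X))
    (hv : 0 < w1 * (b - Y) + w2 * X) : False := by
  have hYb : b < Y := by
    by_contra hcon
    push Not at hcon
    have h1 : 0 ≤ X * n0 := by positivity
    have h2 : 0 < (b - Y) * (n1 - b) := by linarith
    have h3 : 0 < n1 - b := by
      by_contra h4
      push Not at h4
      nlinarith
    nlinarith [mul_pos hX h3, mul_nonneg (sub_nonneg.2 hcon) hn0]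
  obtain ⟨s, hs⟩ : ∃ s, s = m0 - X := ⟨_, rfl⟩
  obtain ⟨t, ht⟩ : ∃ t, t = m1 - Y := ⟨_, rfl⟩
  obtain ⟨e, he⟩ : ∃ e, e = Y - b := ⟨_, rfl⟩
  have he0 : 0 < e := by linarith
  have hb : b - Y = -e := by linarith
  rw [← hs, ← ht, hb] at hm hml
  rw [← hs, ← ht] at hmw
  rw [hb] at hv
  have hs0 : s ≤ 0 := by
    by_contra hcon
    push Not at hcon
    nlinarith [mul_nonneg hX.le hmw, mul_nonneg hw1.le hml, mul_pos hcon hv]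
  have ht0 : t ≤ 0 := by
    by_contra hcon
    push Not at hcon
    nlinarith [mul_pos hX hcon, mul_nonneg he0.le (neg_nonneg.2 hs0)]
  nlinarith [mul_nonneg hX.le (neg_nonneg.2 hs0), mul_nonneg he0.le (neg_nonneg.2 ht0)]

theorem rot_half (d : Plane) : (rot (Real.pi / 2) d) 0 = - d 1 ∧ (rot (Real.pi / 2) d) 1 = d 0 := by
  constructor <;> simp [rot]

theorem unit_sq (d : Plane) (h : ‖d‖ = 1) : d 0 ^ 2 + d 1 ^ 2 = 1 := by
  have := EuclideanSpace.norm_sq_eq d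
  rw [h, Fin.sum_univ_two] at this
  simpa using this.symm

theorem wedge_mem (q d : Plane) (hd : ‖d‖ = 1) (p : Plane) (h : p ∈ wedge (Real.pi / 2) q d) :
    0 ≤ d 0 * (p 0 - q 0) + d 1 * (p 1 - q 1) ∧ 0 ≤ d 0 * (p 1 - q 1) - d 1 * (p 0 - q 0) := by
  obtain ⟨s, t, hs, ht, rfl⟩ := h
  have hu := unit_sq d hd
  obtain ⟨r0, r1⟩ := rot_half d
  simp only [PiLp.add_apply, PiLp.smul_apply, smul_eq_mul, r0, r1]
  constructor
  · have : d 0 * (q 0 + s * d 0 + t * -d 1 - q 0) + d 1 * (q 1 + s * d 1 + t * d 0 - q 1)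
      = s * (d 0 ^ 2 + d 1 ^ 2) := by ring
    rw [this, hu]
    linarith
  · have : d 0 * (q 1 + s * d 1 + t * d 0 - q 1) - d 1 * (q 0 + s * d 0 + t * -d 1 - q 0)
      = t * (d 0 ^ 2 + d 1 ^ 2) := by ring
    rw [this, hu]
    linarith

set_option maxHeartbeats 2000000 in
/-- after the two initialization probes of a polygon with at least 5 vertices
and no narrow vertices (`ω = π/2`), the segment joining `v₃` and `v₂` is not an edge of `O`. -/
theorem not_an_edge (O : ConvexPolygon) (hcard : 5 ≤ O.verts.card)
    (hno : ∀ v ∈ O.verts, Real.pi / 2 < O.intAngle v)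
    (q d v₁ v₂ : Plane) (hp1 : IsValidProbe (Real.pi / 2) O q d)
    (hc1 : ClosestOn q (arm1 q d ∩ O.body) v₁)
    (hc2 : ClosestOn q (arm2 (Real.pi / 2) q d ∩ O.body) v₂)
    (L : DirLine) (hL1 : L.mem v₁) (hL2 : ∃ t : ℝ, 0 < t ∧ v₂ = v₁ + t • L.dir)
    (q' d' v₃ v₄ : Plane) (hp2 : IsValidProbeAlong (Real.pi / 2) O L q' d')
    (hc3 : ClosestOn q' (arm1 q' d' ∩ O.body) v₃)
    (hc4 : ClosestOn q' (arm2 (Real.pi / 2) q' d' ∩ O.body) v₄)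
    (hv₃ : v₃ ≠ v₁ ∧ v₃ ≠ v₂) (hv₄ : v₄ ≠ v₁ ∧ v₄ ≠ v₂) :
    ¬ O.Adj v₃ v₂ := by
  intro hadj
  obtain ⟨hd, hw, -, -⟩ := hp1
  obtain ⟨⟨hd', hw', -, -⟩, ⟨tq, htq⟩, tr, htr, hray⟩ := hp2
  obtain ⟨⟨⟨a, ha, hv1⟩, hb1⟩, hmin1⟩ := hc1
  obtain ⟨⟨⟨b, hb, hv2⟩, hb2⟩, hmin2⟩ := hc2
  obtain ⟨⟨⟨c, hc, hv3⟩, hb3⟩, hmin3⟩ := hc3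
  obtain ⟨⟨⟨h, hh, hv4⟩, hb4⟩, -⟩ := hc4
  obtain ⟨t1, ht1⟩ := hL1
  obtain ⟨τ, hτ, hv12⟩ := hL2
  have hcv : Convex ℝ O.body := convex_convexHull ℝ _
  have hdirne : L.dir ≠ 0 := by
    intro h0
    have := L.norm_dir
    rw [h0] at this
    simp at this
  have hne12 : v₁ ≠ v₂ := by
    intro h0
    rw [← h0] at hv12
    have : τ • L.dir = 0 := by simpa using hv12.symm
    rcases smul_eq_zero.1 this with h1 | h1
    · linarith
    · exact hdirne h1
  have ha0 : 0 < a := by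
    rcases ha.lt_or_eq with h1 | h1
    · exact h1
    exfalso
    rw [← h1] at hv1
    have e : v₁ = q := by simpa using hv1
    have := hmin2 q ⟨⟨0, le_rfl, by simp⟩, e ▸ hb1⟩
    rw [dist_self] at this
    exact hne12 (e.trans (dist_le_zero.1 this))
  have hb0 : 0 < b := by
    rcases hb.lt_or_eq with h1 | h1
    · exact h1
    exfalso
    rw [← h1] at hv2
    have e : v₂ = q := by simpa using hv2
    have := hmin1 q ⟨⟨0, le_rfl, by simp⟩, e ▸ hb2⟩
    rw [dist_self] at this
    exact hne12 ((dist_le_zero.1 this).symm.trans e.symm)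
  obtain ⟨s, hs⟩ : ∃ s : ℝ, q' = v₁ + s • (v₂ - v₁) := by
    refine ⟨(tq - t1) / τ, ?_⟩
    rw [htq, hv12, ht1, add_sub_cancel_left, smul_smul, div_mul_cancel₀ _ hτ.ne', add_assoc,
      ← add_smul]
    congr 2
    ring
  have hdir : L.dir = (1 / τ) • (v₂ - v₁) := by
    rw [hv12, add_sub_cancel_left, smul_smul, one_div, inv_mul_cancel₀ hτ.ne', one_smul]
  rw [hdir, smul_smul] at hray
  obtain ⟨r, hr, hr0⟩ : ∃ r, r = tr * (1 / τ) ∧ 0 ≤ r := ⟨_, rfl, by positivity⟩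
  rw [← hr] at hray
  have hu := unit_sq d hd
  have hu' := unit_sq d' hd'
  obtain ⟨r0, r1⟩ := rot_half d
  obtain ⟨r0', r1'⟩ := rot_half d'
  have cv10 : v₁ 0 = q 0 + a * d 0 := by rw [hv1]; simp
  have cv11 : v₁ 1 = q 1 + a * d 1 := by rw [hv1]; simp
  have cv20 : v₂ 0 = q 0 + b * (-d 1) := by rw [hv2, ← r0]; simp
  have cv21 : v₂ 1 = q 1 + b * d 0 := by rw [hv2, ← r1]; simp
  have cq0 : q' 0 = v₁ 0 + s * (v₂ 0 - v₁ 0) := by rw [hs]; simp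
  have cq1 : q' 1 = v₁ 1 + s * (v₂ 1 - v₁ 1) := by rw [hs]; simp
  have cv30 : v₃ 0 = q' 0 + c * d' 0 := by rw [hv3]; simp
  have cv31 : v₃ 1 = q' 1 + c * d' 1 := by rw [hv3]; simp
  have cv40 : v₄ 0 = q' 0 + h * (-d' 1) := by rw [hv4, ← r0']; simp
  have cv41 : v₄ 1 = q' 1 + h * d' 0 := by rw [hv4, ← r1']; simp
  have W := fun p hp => wedge_mem q d hd p (hw hp)
  have W' := fun p hp => wedge_mem q' d' hd' p (hw' hp)
  obtain ⟨w1, hw1⟩ : ∃ w1, w1 = d 0 * d' 0 + d 1 * d' 1 := ⟨_, rfl⟩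
  obtain ⟨w2, hw2⟩ : ∃ w2, w2 = d 0 * d' 1 - d 1 * d' 0 := ⟨_, rfl⟩
  obtain ⟨x, hx⟩ : ∃ x : Plane → ℝ, ∀ p, x p = d 0 * (p 0 - q 0) + d 1 * (p 1 - q 1) :=
    ⟨_, fun _ => rfl⟩
  obtain ⟨y, hy⟩ : ∃ y : Plane → ℝ, ∀ p, y p = d 0 * (p 1 - q 1) - d 1 * (p 0 - q 0) :=
    ⟨_, fun _ => rfl⟩
  have hww : w1 ^ 2 + w2 ^ 2 = 1 := by
    have : w1 ^ 2 + w2 ^ 2 = (d 0 ^ 2 + d 1 ^ 2) * (d' 0 ^ 2 + d' 1 ^ 2) := by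
      rw [hw1, hw2]; ring
    rw [this, hu, hu', one_mul]
  have x1 : x v₁ = a := by rw [hx, cv10, cv11]; linear_combination a * hu
  have y1 : y v₁ = 0 := by rw [hy, cv10, cv11]; ring
  have x2 : x v₂ = 0 := by rw [hx, cv20, cv21]; ring
  have y2 : y v₂ = b := by rw [hy, cv20, cv21]; linear_combination b * hu
  have xq : x q' = a * (1 - s) := by
    have : x q' = x v₁ + s * (x v₂ - x v₁) := by simp only [hx, cq0, cq1]; ring
    rw [this, x1, x2]; ring
  have yq : y q' = s * b := by
    have : y q' = y v₁ + s * (y v₂ - y v₁) := by simp only [hy, cq0, cq1]; ring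
    rw [this, y1, y2]; ring
  have x3 : x v₃ = a * (1 - s) + c * w1 := by
    rw [← xq, hx, hx, cv30, cv31, hw1]; ring
  have y3 : y v₃ = s * b + c * w2 := by
    rw [← yq, hy, hy, cv30, cv31, hw2]; ring
  have y4 : y v₄ = s * b + h * w1 := by
    rw [← yq, hy, hy, cv40, cv41, hw1]; ring
  have P : ∀ p ∈ O.body, 0 ≤ x p ∧ 0 ≤ y p := by
    intro p hp
    rw [hx, hy]
    exact W p hp
  have dotid : ∀ A0 A1 B0 B1 : ℝ, (d 0 * A0 + d 1 * A1) * (d 0 * B0 + d 1 * B1) +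
      (d 0 * A1 - d 1 * A0) * (d 0 * B1 - d 1 * B0) = A0 * B0 + A1 * B1 := by
    intro A0 A1 B0 B1
    linear_combination (A0 * B0 + A1 * B1) * hu
  have crsid : ∀ A0 A1 B0 B1 : ℝ, (d 0 * A0 + d 1 * A1) * (d 0 * B1 - d 1 * B0) -
      (d 0 * A1 - d 1 * A0) * (d 0 * B0 + d 1 * B1) = A0 * B1 - A1 * B0 := by
    intro A0 A1 B0 B1
    linear_combination (A0 * B1 - A1 * B0) * hu
  have xs : ∀ p r : Plane, x p - x r = d 0 * (p 0 - r 0) + d 1 * (p 1 - r 1) := by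
    intro p r; rw [hx, hx]; ring
  have ys : ∀ p r : Plane, y p - y r = d 0 * (p 1 - r 1) - d 1 * (p 0 - r 0) := by
    intro p r; rw [hy, hy]; ring
  have P' : ∀ p ∈ O.body, 0 ≤ w1 * (x p - x q') + w2 * (y p - y q') ∧
      0 ≤ w1 * (y p - y q') - w2 * (x p - x q') := by
    intro p hp
    obtain ⟨p1, p2⟩ := W' p hp
    rw [xs, ys, hw1, hw2]
    have e1 := dotid (d' 0) (d' 1) (p 0 - q' 0) (p 1 - q' 1)
    have e2 := crsid (d' 0) (d' 1) (p 0 - q' 0) (p 1 - q' 1)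
    constructor <;> linarith
  obtain ⟨k1, k2⟩ := P' v₁ hb1
  obtain ⟨l1, l2⟩ := P' v₂ hb2
  rw [x1, y1, xq, yq] at k1 k2
  rw [x2, y2, xq, yq] at l1 l2
  obtain ⟨D, hD⟩ : ∃ D, D = -a * w1 + b * w2 := ⟨_, rfl⟩
  obtain ⟨C, hC⟩ : ∃ C, C = w1 * b + w2 * a := ⟨_, rfl⟩
  have k1' : 0 ≤ (-s) * D := by rw [hD]; linarith
  have k2' : 0 ≤ (-s) * C := by rw [hC]; linarith
  have l1' : 0 ≤ (1 - s) * D := by rw [hD]; linarith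
  have l2' : 0 ≤ (1 - s) * C := by rw [hC]; linarith
  have hDC : 0 < D ^ 2 + C ^ 2 := by
    have : D ^ 2 + C ^ 2 = (a ^ 2 + b ^ 2) * (w1 ^ 2 + w2 ^ 2) := by rw [hD, hC]; ring
    rw [this, hww]; positivity
  have hs0 : s < 0 := by
    by_contra hcon
    push Not at hcon
    rcases le_or_gt s 1 with h1 | h1
    · have hqb : q' ∈ O.body := by
        rw [hs]
        exact hcv.add_smul_sub_mem hb1 hb2 ⟨hcon, h1⟩
      have := hmin3 q' ⟨⟨0, le_rfl, by simp⟩, hqb⟩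
      rw [dist_self] at this
      have e3 : q' = v₃ := dist_le_zero.1 this
      have s0 : s ≠ 0 := by
        intro h0
        apply hv₃.1
        rw [← e3, hs, h0]; simp
      have s1 : s ≠ 1 := by
        intro h0
        apply hv₃.2
        rw [← e3, hs, h0]; simp
      have s0' : 0 < s := lt_of_le_of_ne hcon s0.symm
      have s1' : 0 < 1 - s := by
        have := lt_of_le_of_ne h1 s1
        linarith
      have D0 : D = 0 := by
        apply le_antisymm
        · have e : -s * D = s * (-D) := by ring
          rw [e] at k1'
          exact neg_nonneg.1 ((mul_nonneg_iff_of_pos_left s0').1 k1')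
        · exact (mul_nonneg_iff_of_pos_left s1').1 l1'
      have C0 : C = 0 := by
        apply le_antisymm
        · have e : -s * C = s * (-C) := by ring
          rw [e] at k2'
          exact neg_nonneg.1 ((mul_nonneg_iff_of_pos_left s0').1 k2')
        · exact (mul_nonneg_iff_of_pos_left s1').1 l2'
      rw [D0, C0] at hDC
      simp at hDC
    · have := (P _ hray).1
      have e : x (q' + r • (v₂ - v₁)) = a * (1 - s) - r * a := by
        have : x (q' + r • (v₂ - v₁)) = x q' + r * (x v₂ - x v₁) := by
          rw [xs, hx, hx]; simp; ring
        rw [this, xq, x1, x2]; ring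
      rw [e] at this
      have i1 := mul_nonneg hr0 ha0.le
      have i2 := mul_pos ha0 (sub_pos.2 h1)
      linarith only [this, i1, i2]
  have hD0 : 0 ≤ D := (mul_nonneg_iff_of_pos_left (neg_pos.2 hs0)).1 k1'
  have hC0 : 0 ≤ C := (mul_nonneg_iff_of_pos_left (neg_pos.2 hs0)).1 k2'
  have hsb : s * b < 0 := mul_neg_of_neg_of_pos hs0 hb0
  have hw1p : 0 < w1 := by
    have := (P v₄ hb4).2
    rw [y4] at this
    by_contra hq
    push Not at hq
    have i1 := mul_nonneg hh (neg_nonneg.2 hq)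
    linarith only [i1, this, hsb]
  have hw2p : 0 < w2 := by
    by_contra hq
    push Not at hq
    have i1 := mul_pos ha0 hw1p
    have i2 := mul_nonneg hb (neg_nonneg.2 hq)
    linarith only [i1, i2, hD, hD0]
  have hCp : 0 < C := by
    rw [hC]; positivity
  have hc0 : 0 < c := by
    rcases hc.lt_or_eq with h1 | h1
    · exact h1
    have := (P v₃ hb3).2
    rw [y3, ← h1] at this
    linarith
  have hX : 0 < x v₃ := by
    rw [x3]
    have : 0 < a * (1 - s) := mul_pos ha0 (by linarith)
    positivity
  have hside : ∀ p ∈ O.body, 0 ≤ (x v₂ - x v₃) * (y p - y v₃) - (y v₂ - y v₃) * (x p - x v₃) := by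
    have e : ∀ p : Plane, (x v₂ - x v₃) * (y p - y v₃) - (y v₂ - y v₃) * (x p - x v₃) =
        crs (v₂ - v₃) (p - v₃) := by
      intro p
      rw [xs, ys, xs, ys, crsid]
      simp [crs]
    rcases adj_support O v₃ v₂ hadj with hs1 | hs1
    · intro p hp
      rw [e]
      exact hs1 p hp
    · exfalso
      have := hs1 v₁ hb1
      rw [← e, x1, x2, y1, y2, x3, y3] at this
      have i1 := mul_pos hc0 hCp
      rw [hC] at i1
      linarith only [i1, this]
  have hdot : ∀ v p r : Plane, (x p - x v) * (x r - x v) + (y p - y v) * (y r - y v) =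
      (p 0 - v 0) * (r 0 - v 0) + (p 1 - v 1) * (r 1 - v 1) := by
    intro v p r
    rw [xs, ys, xs, ys, dotid]
  obtain ⟨n, hnb, hn⟩ := obtuse_nbr O v₂ v₃ (hno v₂ hadj.2.1) (Adj.symm' hadj)
  obtain ⟨m, hmb, hm⟩ := obtuse_nbr O v₃ v₂ (hno v₃ hadj.1) hadj
  rw [← hdot] at hn hm
  have hn' := hside n hnb
  have hm' := hside m hmb
  have hmw := (P' m hmb).2
  rw [x2, y2] at hn hm hn' hm'
  refine core b (x v₃) (y v₃) w1 w2 (x n) (y n) (x m) (y m) hX hw1p hw2p (P n hnb).1 ?_ ?_ ?_ ?_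
    ?_ ?_
  · linarith
  · linarith
  · linarith
  · linarith
  · rw [xq, yq] at hmw
    rw [x3, y3]
    linarith
  · rw [x3, y3]
    have : 0 < (1 - s) * C := mul_pos (by linarith) hCp
    rw [hC] at this
    linarith

end
end

section
/- Let ω satisfy 0 < ω ≤ π/2, let Ψ be a closed disk in ℝ² and let p be a point. There exists a deterministic adaptive probing strategy (depending on ω, Ψ and p) that reconstructs every convex polygon O with p ∈ O ⊂ Ψ all of whose interior angles are strictly greater than ω using at most 2n − 2 valid ω-probes, where n is the number of vertices of O. -/
open Real EuclideanGeometry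

noncomputable section

/-- The outcome of a probe: apex, arm direction, and the two closest contact points. -/
structure Outcome where
  apex : Plane
  dir : Plane
  p₁ : Plane
  p₂ : Plane

/-- `out` is the outcome of a valid `ω`-probe of `O` along `L`: a valid probe together with
the points of each arm ∩ `O` closest to the apex. -/
def IsOutcome (ω : ℝ) (O : ConvexPolygon) (L : DirLine) (out : Outcome) : Prop :=
  IsValidProbeAlong ω O L out.apex out.dir ∧
  ClosestOn out.apex (arm1 out.apex out.dir ∩ O.body) out.p₁ ∧
  ClosestOn out.apex (arm2 ω out.apex out.dir ∩ O.body) out.p₂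

/-- The answer to a query: a probe outcome, or `none` (the token "miss"). -/
abbrev Answer := Option Outcome

/-- A deterministic adaptive probing strategy: maps each finite sequence of answers either to
a next query (a directed line) or to a final output (a convex polygon). -/
abbrev Strategy := List Answer → DirLine ⊕ ConvexPolygon

/-- A correct answer to query `L` against the polygon `O`: the outcome of some valid `ω`-probe
of `O` along `L` if one exists, and "miss" otherwise. -/
def ValidAnswer (ω : ℝ) (O : ConvexPolygon) (L : DirLine) : Answer → Prop
  | none => ¬ ∃ q d, IsValidProbeAlong ω O L q d
  | some out => IsOutcome ω O L out

/-- `l` is (a prefix of) a play of the strategy `S` against `O`: at every proper prefix,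
`S` produces a query, and the corresponding entry of `l` is a correct answer to it. -/
def Consistent (ω : ℝ) (S : Strategy) (O : ConvexPolygon) (l : List Answer) : Prop :=
  ∀ (i : ℕ) (h : i < l.length),
    ∃ L, S (l.take i) = Sum.inl L ∧ ValidAnswer ω O L (l.get ⟨i, h⟩)

/-- `S` reconstructs `O` using at most `k` probes: in every play against `O`, every final
output of `S` is exactly `O`, and `S` produces a final output after at most `k` queries. -/
def Reconstructs (ω : ℝ) (S : Strategy) (O : ConvexPolygon) (k : ℕ) : Prop :=
  (∀ l, Consistent ω S O l → ∀ P, S l = Sum.inr P → P.verts = O.verts) ∧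
  (∀ l, Consistent ω S O l → l.length = k → ∃ P, S l = Sum.inr P)

/-- There is a play of `S` against `O` in which either `S` never outputs `O`
(it plays forever, or outputs a polygon different from `O`), or `S` makes at least `m`
queries before outputting. -/
def BadPlay (ω : ℝ) (S : Strategy) (O : ConvexPolygon) (m : ℕ) : Prop :=
  (∃ f : ℕ → Answer, ∀ k : ℕ, Consistent ω S O (List.ofFn (fun i : Fin k => f i))) ∨
  (∃ l P, Consistent ω S O l ∧ S l = Sum.inr P ∧ (P.verts ≠ O.verts ∨ m ≤ l.length))

/-- Planar cross product. -/
def cr (a b : Plane) : ℝ := a 0 * b 1 - a 1 * b 0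

lemma rot_zero' (θ : ℝ) (d : Plane) : rot θ d 0 = Real.cos θ * d 0 - Real.sin θ * d 1 := by
  simp [rot]

lemma rot_one' (θ : ℝ) (d : Plane) : rot θ d 1 = Real.sin θ * d 0 + Real.cos θ * d 1 := by
  simp [rot]

lemma plane_ext {a b : Plane} (h0 : a 0 = b 0) (h1 : a 1 = b 1) : a = b := by
  ext i; fin_cases i <;> simp [h0, h1]

lemma normsq_plane (d : Plane) : ‖d‖ ^ 2 = d 0 ^ 2 + d 1 ^ 2 := by
  simp [EuclideanSpace.norm_sq_eq, Fin.sum_univ_two]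

lemma inner_plane (a b : Plane) : inner ℝ a b = a 0 * b 0 + a 1 * b 1 := by
  simp [PiLp.inner_apply, Fin.sum_univ_two]; ring

lemma unit_plane {d : Plane} (h : ‖d‖ = 1) : d 0 ^ 2 + d 1 ^ 2 = 1 := by
  rw [← normsq_plane, h]; norm_num

lemma cr_rot {d : Plane} (h : ‖d‖ = 1) (ω : ℝ) : cr d (rot ω d) = Real.sin ω := by
  have := unit_plane h
  simp only [cr, rot_zero', rot_one']; linear_combination Real.sin ω * this

lemma norm_rot {d : Plane} (h : ‖d‖ = 1) (ω : ℝ) : ‖rot ω d‖ = 1 := by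
  have h1 := unit_plane h
  have h2 : ‖rot ω d‖ ^ 2 = 1 := by
    rw [normsq_plane, rot_zero', rot_one']
    have := Real.sin_sq_add_cos_sq ω
    linear_combination (Real.sin ω ^ 2 + Real.cos ω ^ 2) * h1 + this
  have := norm_nonneg (rot ω d)
  nlinarith

lemma cr_add_right (a b c : Plane) : cr a (b + c) = cr a b + cr a c := by
  simp [cr]; ring

lemma cr_sub_right (a b c : Plane) : cr a (b - c) = cr a b - cr a c := by
  simp [cr]; ring

lemma cr_smul_right (a b : Plane) (t : ℝ) : cr a (t • b) = t * cr a b := by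
  simp [cr]; ring

lemma cr_add_left (a b c : Plane) : cr (a + b) c = cr a c + cr b c := by
  simp [cr]; ring

lemma cr_sub_left (a b c : Plane) : cr (a - b) c = cr a c - cr b c := by
  simp [cr]; ring

lemma cr_smul_left (a b : Plane) (t : ℝ) : cr (t • a) b = t * cr a b := by
  simp [cr]; ring

lemma cr_self (a : Plane) : cr a a = 0 := by simp [cr]; ring

lemma cr_swap (a b : Plane) : cr a b = - cr b a := by simp [cr]; ring

lemma eq_zero_of_cr {d e x : Plane} (h : cr d e ≠ 0) (h1 : cr d x = 0) (h2 : cr e x = 0) :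
    x = 0 := by
  simp only [cr] at *
  apply plane_ext
  · have : (d 0 * e 1 - d 1 * e 0) * x 0 = 0 := by linear_combination e 0 * h1 - d 0 * h2
    simpa [h] using this
  · have : (d 0 * e 1 - d 1 * e 0) * x 1 = 0 := by linear_combination e 1 * h1 - d 1 * h2
    simpa [h] using this

/-- a vector is recovered from its two cross products -/
lemma decomp {d e : Plane} (h : cr d e ≠ 0) (x : Plane) :
    x = (-(cr e x) / cr d e) • d + (cr d x / cr d e) • e := by
  have : x - ((-(cr e x) / cr d e) • d + (cr d x / cr d e) • e) = 0 := by
    apply eq_zero_of_cr h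
    · rw [cr_sub_right, cr_add_right, cr_smul_right, cr_smul_right, cr_self]; field_simp; ring
    · rw [cr_sub_right, cr_add_right, cr_smul_right, cr_smul_right, cr_self, cr_swap e d]
      field_simp; ring
  exact sub_eq_zero.1 this

lemma sub_of_cr_zero {d x : Plane} (hd : d ≠ 0) (h : cr d x = 0) : ∃ t : ℝ, x = t • d := by
  have hn : d 0 ^ 2 + d 1 ^ 2 ≠ 0 := by
    intro h0
    apply hd
    apply plane_ext <;> simp <;> nlinarith [sq_nonneg (d 0), sq_nonneg (d 1)]
  refine ⟨(d 0 * x 0 + d 1 * x 1) / (d 0 ^ 2 + d 1 ^ 2), ?_⟩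
  simp only [cr] at h
  apply plane_ext
  · simp; field_simp; linear_combination -d 1 * h
  · simp; field_simp; linear_combination d 0 * h

lemma no_three_s13 (O : ConvexPolygon) {a b c : Plane} (ha : a ∈ O.verts) (hb : b ∈ O.verts)
    (hc : c ∈ O.verts) (hab : a ≠ b) (hac : a ≠ c) (hbc : b ≠ c) : cr (b - a) (c - a) ≠ 0 := by
  intro h
  obtain ⟨t, ht⟩ := sub_of_cr_zero (sub_ne_zero.2 hab.symm) h
  have key : ∀ x y z : Plane, x ∈ O.verts → y ∈ O.verts → z ∈ O.verts → x ≠ y → x ≠ z →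
      x ∈ segment ℝ y z → False := by
    intro x y z hx hy hz hxy hxz hs
    apply O.strictConvexPos x hx
    exact segment_subset_convexHull (by simp [hy, hxy.symm]) (by simp [hz, hxz.symm]) hs
  have hc' : c = a + t • (b - a) := by rw [← ht]; abel
  rcases lt_or_ge t 0 with h0 | h0
  · refine key a b c ha hb hc hab hac ⟨-t / (1 - t), 1 / (1 - t), ?_, ?_, ?_, ?_⟩
    · apply div_nonneg <;> linarith
    · apply div_nonneg <;> linarith
    · have : 1 - t ≠ 0 := by linarith
      field_simp; ring
    · have : 1 - t ≠ 0 := by linarith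
      rw [hc']
      apply plane_ext <;> simp <;> field_simp <;> ring
  rcases le_or_gt t 1 with h1 | h1
  · refine key c a b hc ha hb hac.symm hbc.symm ⟨1 - t, t, by linarith, h0, by ring, ?_⟩
    rw [hc']; apply plane_ext <;> simp <;> ring
  · refine key b a c hb ha hc hab.symm hbc ⟨(t - 1) / t, 1 / t, ?_, ?_, ?_, ?_⟩
    · apply div_nonneg <;> linarith
    · apply div_nonneg <;> linarith
    · have : t ≠ 0 := by linarith
      field_simp; ring
    · have : t ≠ 0 := by linarith
      rw [hc']
      apply plane_ext <;> simp <;> field_simp <;> ring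

/-- extreme (angular) points as seen from an outside point -/
lemma exists_tangent {K : Set Plane} (hK : K.Finite) (hne : K.Nonempty) {x : Plane}
    (hx : x ∉ convexHull ℝ K) :
    (∃ u ∈ K, ∀ k ∈ K, 0 ≤ cr (u - x) (k - x)) ∧ (∃ u ∈ K, ∀ k ∈ K, cr (u - x) (k - x) ≤ 0) := by
  have hcl : IsClosed (convexHull ℝ K) := (hK.isCompact_convexHull (𝕜 := ℝ)).isClosed
  obtain ⟨f, r, hfx, hf⟩ := geometric_hahn_banach_point_closed (convex_convexHull ℝ K) hcl hx
  obtain ⟨n, hn⟩ : ∃ n : Plane, ∀ y, f y = n 0 * y 0 + n 1 * y 1 := by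
    refine ⟨(InnerProductSpace.toDual ℝ Plane).symm f, fun y => ?_⟩
    rw [← inner_plane, InnerProductSpace.toDual_symm_apply]
  have hpos : ∀ k ∈ K, 0 < f (k - x) := by
    intro k hk
    have := hf k (subset_convexHull ℝ K hk)
    rw [map_sub]; linarith
  have hN : 0 < n 0 ^ 2 + n 1 ^ 2 := by
    obtain ⟨k, hk⟩ := hne
    have h := hpos k hk
    rw [hn] at h
    by_contra hh
    have h0 : n 0 = 0 := by nlinarith [sq_nonneg (n 0), sq_nonneg (n 1)]
    have h1 : n 1 = 0 := by nlinarith [sq_nonneg (n 0), sq_nonneg (n 1)]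
    simp [h0, h1] at h
  have hid : ∀ a b : Plane, (n 0 ^ 2 + n 1 ^ 2) * cr a b = f a * cr n b - cr n a * f b := by
    intro a b; rw [hn, hn]; simp only [cr]; ring
  constructor
  · obtain ⟨u, hu, hmin⟩ := Set.exists_min_image K (fun k => cr n (k - x) / f (k - x)) hK hne
    refine ⟨u, hu, fun k hk => ?_⟩
    have h := hmin k hk
    rw [div_le_div_iff₀ (hpos u hu) (hpos k hk)] at h
    have := hid (u - x) (k - x)
    by_contra hh
    nlinarith
  · obtain ⟨u, hu, hmin⟩ := Set.exists_max_image K (fun k => cr n (k - x) / f (k - x)) hK hne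
    refine ⟨u, hu, fun k hk => ?_⟩
    have h := hmin k hk
    rw [div_le_div_iff₀ (hpos k hk) (hpos u hu)] at h
    have := hid (u - x) (k - x)
    by_contra hh
    nlinarith

/-- if every `K`-left pair of a subset `K` of the vertices is an edge of `O`, `K` is everything -/
lemma all_of_edges (O : ConvexPolygon) {K : Set Plane} (hK : K ⊆ O.verts)
    (h2 : ∃ a ∈ K, ∃ b ∈ K, a ≠ b)
    (hE : ∀ w ∈ K, ∀ v ∈ K, w ≠ v → (∀ k ∈ K, 0 ≤ cr (v - w) (k - w)) →
      ∀ k ∈ O.verts, 0 ≤ cr (v - w) (k - w)) : K = O.verts := by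
  have hfin : K.Finite := O.verts.finite_toSet.subset hK
  apply hK.antisymm
  intro x hx
  by_contra hxK
  obtain ⟨a, ha, b, hb, hab⟩ := h2
  have hx' : x ∉ convexHull ℝ K := fun h => O.strictConvexPos x hx
    (convexHull_mono (show K ⊆ (O.verts : Set Plane) \ {x} from
      fun y hy => ⟨hK hy, fun h => hxK (Set.mem_singleton_iff.1 h ▸ hy)⟩) h)
  obtain ⟨-, w, hw, hwl⟩ := exists_tangent hfin ⟨a, ha⟩ hx'
  have hw' : w ∉ convexHull ℝ (K \ {w}) := fun h => O.strictConvexPos w (hK hw)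
    (convexHull_mono (Set.sdiff_subset_sdiff_left hK) h)
  have hne : (K \ {w}).Nonempty := by
    by_cases haw : a = w
    · exact ⟨b, hb, fun h => hab (haw.trans h.symm)⟩
    · exact ⟨a, ha, haw⟩
  obtain ⟨⟨v, hv, hvr⟩, -⟩ := exists_tangent (hfin.subset Set.sdiff_subset) hne hw'
  have hwv : w ≠ v := fun h => hv.2 h.symm
  have h1 := hE w hw v hv.1 hwv (by
    intro k hk
    by_cases hkw : k = w
    · simp [hkw, cr]
    · exact hvr k ⟨hk, hkw⟩) x hx
  have h2 := hwl v hv.1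
  have h3 : cr (v - w) (x - w) = 0 := by
    have : cr (v - w) (x - w) = cr (w - x) (v - x) := by simp [cr]; ring
    linarith
  exact no_three_s13 O (hK hw) (hK hv.1) hx hwv (by rintro rfl; exact hxK hw)
    (by rintro rfl; exact hxK hv.1) h3

lemma sin_pos' {ω : ℝ} (h0 : 0 < ω) (h1 : ω ≤ Real.pi / 2) : 0 < Real.sin ω :=
  Real.sin_pos_of_pos_of_lt_pi h0 (by linarith [Real.pi_pos])

lemma vert_mem (O : ConvexPolygon) {v : Plane} (h : v ∈ O.verts) : v ∈ O.body :=
  subset_convexHull ℝ _ h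

lemma verts_ne (O : ConvexPolygon) : O.verts.Nonempty :=
  Finset.card_pos.1 (by have := O.three_le_card; omega)

lemma exists_min_cr (O : ConvexPolygon) :
    ∃ m : Plane → ℝ, Continuous m ∧ (∀ d, ∀ x ∈ O.body, m d ≤ cr d x) ∧
      ∀ d, ∃ x ∈ O.body, cr d x = m d := by
  have hne := verts_ne O
  refine ⟨fun d => O.verts.inf' hne (fun v => cr d v), ?_, ?_, ?_⟩
  · apply Continuous.finset_inf'_apply
    intro v hv
    unfold cr
    fun_prop
  · intro d x hx
    have hconv : Convex ℝ {x : Plane | O.verts.inf' hne (fun v => cr d v) ≤ cr d x} := by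
      intro a ha b hb s t hs ht hst
      simp only [Set.mem_ofPred_eq] at *
      rw [cr_add_right, cr_smul_right, cr_smul_right]
      have : O.verts.inf' hne (fun v => cr d v) = s * O.verts.inf' hne (fun v => cr d v)
        + t * O.verts.inf' hne (fun v => cr d v) := by rw [← add_mul, hst, one_mul]
      rw [this]; gcongr
    exact convexHull_min (fun v hv => Finset.inf'_le (fun v => cr d v) hv) hconv hx
  · intro d
    obtain ⟨v, hv, h⟩ := Finset.exists_mem_eq_inf' hne (fun v => cr d v)
    exact ⟨v, vert_mem O hv, h.symm⟩

/-- Existence of a valid probe along every line meeting `O`. -/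
lemma exists_probe {ω : ℝ} (h0 : 0 < ω) (h1 : ω ≤ Real.pi / 2) (O : ConvexPolygon) (L : DirLine)
    (hL : L.pt ∈ O.body) : ∃ q d, IsValidProbeAlong ω O L q d := by
  have hs := sin_pos' h0 h1
  obtain ⟨m, hmc, hml, hma⟩ := exists_min_cr O
  set u := L.dir with hu
  have hun : ‖u‖ = 1 := L.norm_dir
  -- m2 e = max of cr e = - m (-e)
  let q : ℝ → Plane := fun θ =>
    (Real.sin ω)⁻¹ • (m (rot θ u) • rot ω (rot θ u) + m (-rot ω (rot θ u)) • rot θ u)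
  have hrc : ∀ c : Plane → Plane, Continuous c → ∀ θ, Continuous fun x => rot θ (c x) := by
    intro c hc θ
    unfold rot
    simp only [WithLp.equiv_symm_apply]
    apply (PiLp.continuous_toLp 2 _).comp
    apply continuous_pi
    intro i; fin_cases i <;> simp <;> fun_prop
  have hr1 : Continuous fun θ => rot θ u := by
    unfold rot
    simp only [WithLp.equiv_symm_apply]
    apply (PiLp.continuous_toLp 2 _).comp
    apply continuous_pi
    intro i; fin_cases i <;> simp <;> fun_prop
  have hr2 : Continuous fun θ => rot ω (rot θ u) := (hrc id continuous_id ω).comp hr1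
  have hqc : Continuous q := by
    have := hmc.comp hr1
    have := hmc.comp hr2.neg
    fun_prop
  have hdn : ∀ θ, ‖rot θ u‖ = 1 := fun θ => norm_rot hun θ
  have hq1 : ∀ θ, cr (rot θ u) (q θ) = m (rot θ u) := by
    intro θ
    simp only [q, cr_smul_right, cr_add_right, cr_self, cr_rot (hdn θ)]
    field_simp; ring
  have hq2 : ∀ θ, cr (rot ω (rot θ u)) (q θ) = - m (-rot ω (rot θ u)) := by
    intro θ
    simp only [q, cr_smul_right, cr_add_right, cr_self, cr_swap _ (rot θ u), cr_rot (hdn θ)]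
    field_simp; ring
  have hcn : ∀ a b : Plane, cr (-a) b = - cr a b := by intro a b; simp [cr]; ring
  have hrot0 : rot 0 u = u := by apply plane_ext <;> simp [rot]
  have hrotω : rot ω (rot (-ω) u) = u := by
    have := Real.sin_sq_add_cos_sq ω
    apply plane_ext <;> simp only [rot_zero', rot_one', Real.cos_neg, Real.sin_neg]
    · linear_combination u 0 * this
    · linear_combination u 1 * this
  have hf : ContinuousOn (fun θ => cr u (q θ)) (Set.Icc (-ω) 0) := by
    unfold cr; fun_prop
  have hmem : cr u L.pt ∈ (fun θ => cr u (q θ)) '' Set.Icc (-ω) 0 := by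
    apply intermediate_value_Icc' (by linarith) hf
    constructor
    · have := hq1 0
      rw [hrot0] at this
      simp only [this]; exact hml u _ hL
    · have := hq2 (-ω)
      rw [hrotω] at this
      simp only [this]
      have := hml (-u) _ hL
      rw [hcn] at this; linarith
  obtain ⟨θ, ⟨hθ1, hθ2⟩, hθ⟩ := hmem
  set d := rot θ u with hd
  set e := rot ω d with he
  have hde : cr d e = Real.sin ω := cr_rot (hdn θ) ω
  have hb1 : ∀ x ∈ O.body, 0 ≤ cr d (x - q θ) := by
    intro x hx
    rw [cr_sub_right, hq1 θ]; linarith [hml d x hx]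
  have hb2 : ∀ x ∈ O.body, cr e (x - q θ) ≤ 0 := by
    intro x hx
    have := hml (-e) x hx
    rw [hcn] at this
    rw [cr_sub_right, hq2 θ]; linarith
  have hdec : ∀ x ∈ O.body, x = q θ + (-(cr e (x - q θ)) / cr d e) • d
      + (cr d (x - q θ) / cr d e) • e := by
    intro x hx
    have := decomp (d := d) (e := e) (by rw [hde]; exact hs.ne') (x - q θ)
    rw [add_assoc, ← this]; abel
  have hdu : cr d u = - Real.sin θ := by
    have := unit_plane hun
    simp only [hd, cr, rot_zero', rot_one']; linear_combination (-Real.sin θ) * this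
  have heu : cr e u = - Real.sin (ω + θ) := by
    have := unit_plane hun
    simp only [he, hd, cr, rot_zero', rot_one', Real.sin_add]
    linear_combination (-(Real.sin ω * Real.cos θ + Real.cos ω * Real.sin θ)) * this
  have hsθ : 0 ≤ - Real.sin θ := by
    rw [← Real.sin_neg]; apply Real.sin_nonneg_of_nonneg_of_le_pi <;> linarith [Real.pi_pos]
  have hsθ2 : 0 ≤ Real.sin (ω + θ) := by
    apply Real.sin_nonneg_of_nonneg_of_le_pi <;> linarith [Real.pi_pos]
  have hu0 : u ≠ 0 := by intro h; rw [h] at hun; simp at hun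
  obtain ⟨t, ht⟩ := sub_of_cr_zero (x := L.pt - q θ) hu0 (by rw [cr_sub_right]; linarith)
  refine ⟨q θ, d, ⟨hdn θ, ?_, ?_, ?_⟩, ⟨-t, ?_⟩, ?_⟩
  · intro x hx
    refine ⟨_, _, ?_, ?_, hdec x hx⟩
    · rw [hde]; exact div_nonneg (by linarith [hb2 x hx]) hs.le
    · rw [hde]; exact div_nonneg (by linarith [hb1 x hx]) hs.le
  · obtain ⟨x, hx, hxm⟩ := hma d
    refine ⟨x, ⟨-(cr e (x - q θ)) / cr d e, ?_, ?_⟩, hx⟩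
    · rw [hde]; exact div_nonneg (by linarith [hb2 x hx]) hs.le
    · have := hdec x hx
      have h0 : cr d (x - q θ) = 0 := by rw [cr_sub_right, hxm, hq1 θ]; ring
      rw [h0] at this
      simpa using this
  · obtain ⟨x, hx, hxm⟩ := hma (-e)
    refine ⟨x, ⟨cr d (x - q θ) / cr d e, ?_, ?_⟩, hx⟩
    · rw [hde]; exact div_nonneg (by linarith [hb1 x hx]) hs.le
    · have := hdec x hx
      have h0 : cr e (x - q θ) = 0 := by
        rw [hcn] at hxm
        rw [cr_sub_right, hq2 θ]; linarith
      rw [h0] at this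
      simpa using this
  · have : q θ = L.pt - (L.pt - q θ) := by abel
    rw [this, ht]; rw [neg_smul]; abel
  · by_cases ht0 : 0 ≤ t
    · refine ⟨t, ht0, ?_⟩
      rw [← ht]; simpa using hL
    · push Not at ht0
      have a1 := hb1 _ hL
      have a2 := hb2 _ hL
      rw [ht, cr_smul_right, hdu] at a1
      rw [ht, cr_smul_right, heu] at a2
      have z1 : cr d u = 0 := by rw [hdu]; nlinarith
      have z2 : cr e u = 0 := by rw [heu]; nlinarith
      exact absurd (eq_zero_of_cr (by rw [hde]; exact hs.ne') z1 z2) hu0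

lemma wedge_cr {ω : ℝ} {q d x : Plane} (hs : 0 < Real.sin ω) (hd : ‖d‖ = 1)
    (hx : x ∈ wedge ω q d) : 0 ≤ cr d (x - q) ∧ cr (rot ω d) (x - q) ≤ 0 := by
  obtain ⟨s, t, h0, h1, rfl⟩ := hx
  have e1 : q + s • d + t • rot ω d - q = s • d + t • rot ω d := by abel
  rw [e1, cr_add_right, cr_add_right, cr_smul_right, cr_smul_right, cr_smul_right, cr_smul_right,
    cr_self, cr_self, cr_swap (rot ω d) d, cr_rot hd]
  constructor
  · have := mul_nonneg h1 hs.le; linarith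
  · have := mul_nonneg h0 hs.le; linarith

lemma mem_verts_of_extreme {O : ConvexPolygon} {x : Plane} (hx : x ∈ O.body)
    (h : ∀ a ∈ O.body, ∀ b ∈ O.body, ∀ s t : ℝ, 0 < s → 0 < t → s + t = 1 →
      s • a + t • b = x → a = x) : x ∈ O.verts := by
  have : x ∈ (convexHull ℝ (O.verts : Set Plane)).extremePoints ℝ := by
    refine mem_extremePoints_iff_left.2 ⟨hx, ?_⟩
    rintro a ha b hb ⟨s, t, hs, ht, hst, hab⟩
    exact h a ha b hb s t hs ht hst hab
  exact extremePoints_convexHull_subset this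

/-- A linear functional nonnegative on the polygon vanishing at a convex combination. -/
lemma zero_of_comb {d q a b x : Plane} {s t : ℝ} (hs : 0 < s) (ht : 0 < t) (hst : s + t = 1)
    (hab : s • a + t • b = x) (ha : 0 ≤ cr d (a - q)) (hb : 0 ≤ cr d (b - q))
    (hx : cr d (x - q) = 0) : cr d (a - q) = 0 ∧ cr d (b - q) = 0 := by
  have h : s * cr d (a - q) + t * cr d (b - q) = 0 := by
    rw [← hx, ← hab]
    simp only [cr_sub_right, cr_add_right, cr_smul_right]
    linear_combination -(cr d q) * hst
  have h1 := mul_nonneg hs.le ha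
  have h2 := mul_nonneg ht.le hb
  constructor
  · have : s * cr d (a - q) = 0 := by linarith
    simpa [hs.ne'] using this
  · have : t * cr d (b - q) = 0 := by linarith
    simpa [ht.ne'] using this

lemma cr_neg_left (a b : Plane) : cr (-a) b = - cr a b := by simp [cr]; ring

lemma angle_wedge {ω : ℝ} (h0 : 0 < ω) (h1 : ω ≤ Real.pi / 2) {q d a b : Plane} (hd : ‖d‖ = 1)
    (ha : a ∈ wedge ω q d) (hb : b ∈ wedge ω q d) (haq : a ≠ q) (hbq : b ≠ q) :
    ∠ a q b ≤ ω := by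
  by_contra hlt
  push Not at hlt
  obtain ⟨s, t, hs, ht, rfl⟩ := ha
  obtain ⟨s', t', hs', ht', rfl⟩ := hb
  have hc0 : 0 ≤ Real.cos ω := Real.cos_nonneg_of_neg_pi_div_two_le_of_le (by linarith) h1
  rw [EuclideanGeometry.angle] at hlt
  simp only [vsub_eq_sub] at hlt
  set U : Plane := q + s • d + t • rot ω d - q with hU
  set W : Plane := q + s' • d + t' • rot ω d - q with hW
  have hU0 : 0 < ‖U‖ := norm_pos_iff.2 (sub_ne_zero.2 haq)
  have hW0 : 0 < ‖W‖ := norm_pos_iff.2 (sub_ne_zero.2 hbq)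
  have hcos := Real.cos_lt_cos_of_nonneg_of_le_pi h0.le (InnerProductGeometry.angle_le_pi U W) hlt
  rw [InnerProductGeometry.cos_angle, div_lt_iff₀ (mul_pos hU0 hW0)] at hcos
  have hu := unit_plane hd
  have hsc := Real.sin_sq_add_cos_sq ω
  set c := Real.cos ω with hc
  set σ := Real.sin ω with hσ
  have hin : inner ℝ U W = s * s' + t * t' + (s * t' + s' * t) * c := by
    rw [inner_plane]
    simp only [hU, hW, PiLp.sub_apply, PiLp.add_apply, PiLp.smul_apply, rot_zero', rot_one',
      smul_eq_mul, ← hc, ← hσ]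
    linear_combination (s * s' + t * t' * (σ ^ 2 + c ^ 2) + (s * t' + s' * t) * c) * hu +
      (t * t') * hsc
  have hcr : cr U W = (s * t' - s' * t) * σ := by
    simp only [cr, hU, hW, PiLp.sub_apply, PiLp.add_apply, PiLp.smul_apply, rot_zero', rot_one',
      smul_eq_mul, ← hc, ← hσ]
    linear_combination ((s * t' - s' * t) * σ) * hu
  have hlag : ‖U‖ ^ 2 * ‖W‖ ^ 2 = inner ℝ U W ^ 2 + cr U W ^ 2 := by
    rw [normsq_plane, normsq_plane, inner_plane]; simp only [cr]; ring
  set I := inner ℝ U W with hI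
  have p1 := mul_nonneg hs ht'
  have p2 := mul_nonneg hs' ht
  have p3 := mul_nonneg hs hs'
  have p4 := mul_nonneg ht ht'
  have hI0 : c * (s * t' + s' * t) ≤ I := by rw [hin]; linarith
  have hI1 : 0 ≤ I := le_trans (by positivity) hI0
  have hsq : I ^ 2 < (c * (‖U‖ * ‖W‖)) ^ 2 := by gcongr
  have hI2 : (c * (s * t' - s' * t)) ^ 2 ≤ I ^ 2 := by
    apply sq_le_sq'
    · nlinarith
    · nlinarith
  have e1 : (c * (‖U‖ * ‖W‖)) ^ 2 = c ^ 2 * I ^ 2 + σ ^ 2 * (c * (s * t' - s' * t)) ^ 2 := by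
    have : (c * (‖U‖ * ‖W‖)) ^ 2 = c ^ 2 * (‖U‖ ^ 2 * ‖W‖ ^ 2) := by ring
    rw [this, hlag, hcr]; ring
  have e2 := mul_le_mul_of_nonneg_left hI2 (sq_nonneg σ)
  have e3 : σ ^ 2 * I ^ 2 + c ^ 2 * I ^ 2 = I ^ 2 := by rw [← add_mul, hsc, one_mul]
  linarith

/-- All we need to know about an outcome. -/
structure Facts (ω : ℝ) (O : ConvexPolygon) (o : Outcome) : Prop where
  unit : ‖o.dir‖ = 1
  left : ∀ x ∈ O.body, 0 ≤ cr o.dir (x - o.apex)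
  right : ∀ x ∈ O.body, cr (rot ω o.dir) (x - o.apex) ≤ 0
  apex_notMem : o.apex ∉ O.body
  v1 : o.p₁ ∈ O.verts
  v2 : o.p₂ ∈ O.verts
  r1 : ∃ r : ℝ, 0 < r ∧ o.p₁ = o.apex + r • o.dir
  r2 : ∃ r : ℝ, 0 < r ∧ o.p₂ = o.apex + r • rot ω o.dir

lemma facts {ω : ℝ} (h0 : 0 < ω) (h1 : ω ≤ Real.pi / 2) {O : ConvexPolygon}
    (hO : ∀ v ∈ O.verts, ω < O.intAngle v) {L : DirLine} {o : Outcome}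
    (h : IsOutcome ω O L o) : Facts ω O o := by
  obtain ⟨⟨⟨hd, hsub, -, -⟩, -, -⟩, ⟨⟨⟨t1, ht1, hp1⟩, hb1⟩, hc1⟩, ⟨⟨⟨t2, ht2, hp2⟩, hb2⟩, hc2⟩⟩ := h
  have hs := sin_pos' h0 h1
  have hen := norm_rot hd ω
  have hde : cr o.dir (rot ω o.dir) ≠ 0 := by rw [cr_rot hd]; exact hs.ne'
  have hl : ∀ x ∈ O.body, 0 ≤ cr o.dir (x - o.apex) := fun x hx => (wedge_cr hs hd (hsub hx)).1
  have hr : ∀ x ∈ O.body, cr (rot ω o.dir) (x - o.apex) ≤ 0 :=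
    fun x hx => (wedge_cr hs hd (hsub hx)).2
  have hr' : ∀ x ∈ O.body, 0 ≤ cr (-rot ω o.dir) (x - o.apex) := by
    intro x hx; rw [cr_neg_left]; linarith [hr x hx]
  have hnot : o.apex ∉ O.body := by
    intro hq
    have hqv : o.apex ∈ O.verts := by
      apply mem_verts_of_extreme hq
      intro a ha b hb s t hs' ht' hst hab
      have z1 := zero_of_comb (q := o.apex) hs' ht' hst hab (hl a ha) (hl b hb) (by simp [cr])
      have z2 := zero_of_comb (q := o.apex) hs' ht' hst hab (hr' a ha) (hr' b hb) (by simp [cr])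
      have z3 := z2.1
      rw [cr_neg_left, neg_eq_zero] at z3
      exact sub_eq_zero.1 (eq_zero_of_cr hde z1.1 z3)
    have hlt := hO _ hqv
    have hne : {θ | ∃ u w, O.Adj o.apex u ∧ O.Adj o.apex w ∧ u ≠ w ∧ θ = ∠ u o.apex w}.Nonempty := by
      by_contra hemp
      rw [Set.not_nonempty_iff_eq_empty] at hemp
      rw [ConvexPolygon.intAngle, hemp, Real.sSup_empty] at hlt
      linarith
    obtain ⟨θ, ⟨u, w, hu, hw, -, rfl⟩, hθ⟩ := exists_lt_of_lt_csSup hne hlt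
    have := angle_wedge h0 h1 hd (hsub (vert_mem O hu.2.1)) (hsub (vert_mem O hw.2.1))
      hu.2.2.1.symm hw.2.2.1.symm
    linarith
  have hext : ∀ (e p : Plane) (t : ℝ), ‖e‖ = 1 → 0 ≤ t → p = o.apex + t • e → p ∈ O.body →
      ((∀ x ∈ O.body, 0 ≤ cr e (x - o.apex)) ∨ (∀ x ∈ O.body, cr e (x - o.apex) ≤ 0)) →
      (∀ (x : Plane) (s : ℝ), x ∈ O.body → x = o.apex + s • e → 0 ≤ s) →
      (∀ x ∈ arm1 o.apex e ∩ O.body, dist o.apex p ≤ dist o.apex x) → p ∈ O.verts := by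
    intro e p t he ht hp hpb hside hpos hcl
    have he0 : e ≠ 0 := by intro h; rw [h] at he; simp at he
    have hpz : cr e (p - o.apex) = 0 := by rw [hp, add_sub_cancel_left, cr_smul_right, cr_self]; simp
    have hdist : ∀ s : ℝ, 0 ≤ s → dist o.apex (o.apex + s • e) = s := by
      intro s hs; rw [dist_self_add_right, norm_smul, he, Real.norm_of_nonneg hs, mul_one]
    have hge : ∀ x ∈ O.body, cr e (x - o.apex) = 0 → ∃ s, t ≤ s ∧ x = o.apex + s • e := by
      intro x hx hz
      obtain ⟨s, hs⟩ := sub_of_cr_zero he0 hz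
      have hs' : x = o.apex + s • e := by rw [← hs]; abel
      have hs0 := hpos x s hx hs'
      refine ⟨s, ?_, hs'⟩
      have := hcl x ⟨⟨s, hs0, hs'⟩, hx⟩
      rwa [hp, hs', hdist t ht, hdist s hs0] at this
    apply mem_verts_of_extreme hpb
    intro a ha b hb s s' hs hs' hss hab
    have hz : cr e (a - o.apex) = 0 ∧ cr e (b - o.apex) = 0 := by
      rcases hside with hside | hside
      · exact zero_of_comb hs hs' hss hab (hside a ha) (hside b hb) hpz
      · have := zero_of_comb (d := -e) (q := o.apex) hs hs' hss hab
          (by rw [cr_neg_left]; linarith [hside a ha]) (by rw [cr_neg_left]; linarith [hside b hb])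
          (by rw [cr_neg_left, hpz, neg_zero])
        simpa [cr_neg_left] using this
    obtain ⟨α, hα, haα⟩ := hge a ha hz.1
    obtain ⟨β, hβ, hbβ⟩ := hge b hb hz.2
    have hcomb : (s * α + s' * β - t) • e = 0 := by
      have h1 : s • a + s' • b = o.apex + (s * α + s' * β) • e := by
        rw [haα, hbβ]
        have : s' = 1 - s := by linarith
        rw [this]; module
      rw [hab, hp] at h1
      rw [sub_smul, sub_eq_zero]
      exact (add_left_cancel h1).symm
    have h2 : s * α + s' * β = t := by
      rcases smul_eq_zero.1 hcomb with h | h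
      · linarith
      · exact absurd h he0
    have h3 : α = t := by
      have : s' = 1 - s := by linarith
      rw [this] at h2 hs'
      nlinarith
    rw [haα, hp, h3]
  refine ⟨hd, hl, hr, hnot, ?_, ?_, ⟨t1, ?_, hp1⟩, ⟨t2, ?_, hp2⟩⟩
  · refine hext o.dir o.p₁ t1 hd ht1 hp1 hb1 (Or.inl hl) ?_ hc1
    intro x s hx hxs
    have := hr x hx
    rw [hxs, add_sub_cancel_left, cr_smul_right, cr_swap, cr_rot hd] at this
    by_contra hneg
    nlinarith
  · refine hext _ o.p₂ t2 hen ht2 hp2 hb2 (Or.inr hr) ?_ hc2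
    intro x s hx hxs
    have := hl x hx
    rw [hxs, add_sub_cancel_left, cr_smul_right, cr_rot hd] at this
    by_contra hneg
    nlinarith
  · rcases ht1.lt_or_eq with h | h
    · exact h
    · rw [← h, zero_smul, add_zero] at hp1
      exact absurd (hp1 ▸ hb1) hnot
  · rcases ht2.lt_or_eq with h | h
    · exact h
    · rw [← h, zero_smul, add_zero] at hp2
      exact absurd (hp2 ▸ hb2) hnot

/-- The directed line through two distinct points. -/
def lineOf (w v : Plane) (h : w ≠ v) : DirLine where
  pt := w
  dir := ‖v - w‖⁻¹ • (v - w)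
  norm_dir := by
    have : ‖v - w‖ ≠ 0 := norm_ne_zero_iff.2 (sub_ne_zero.2 h.symm)
    rw [norm_smul, norm_inv, norm_norm, inv_mul_cancel₀ this]

/-- Known vertices. -/
def Kn (l : List Answer) : Set Plane := {x | ∃ o, some o ∈ l ∧ (x = o.p₁ ∨ x = o.p₂)}

/-- The oriented edge `a → b` is confirmed by the outcome `o`. -/
def Conf1 (ω : ℝ) (o : Outcome) (a b : Plane) : Prop :=
  a ≠ b ∧ ∃ s t : ℝ, s < t ∧ ((a = o.apex + s • o.dir ∧ b = o.apex + t • o.dir) ∨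
    (a = o.apex + t • rot ω o.dir ∧ b = o.apex + s • rot ω o.dir))

/-- The oriented edge `a → b` is confirmed by the answers so far. -/
def Conf (ω : ℝ) (l : List Answer) (a b : Plane) : Prop := ∃ o, some o ∈ l ∧ Conf1 ω o a b

/-- Known vertices with a confirmed outgoing edge. -/
def Cn (ω : ℝ) (l : List Answer) : Set Plane := {a | a ∈ Kn l ∧ ∃ b ∈ Kn l, Conf ω l a b}

/-- An unconfirmed candidate edge. -/
def Pair (ω : ℝ) (l : List Answer) (w v : Plane) : Prop :=
  w ∈ Kn l ∧ v ∈ Kn l ∧ w ≠ v ∧ (∀ k ∈ Kn l, 0 ≤ cr (v - w) (k - w)) ∧ ¬ Conf ω l w v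

/-- The first query. -/
def line0 (p : Plane) : DirLine where
  pt := p
  dir := EuclideanSpace.single 0 1
  norm_dir := by simp

open Classical in
/-- The strategy. -/
def strat (ω : ℝ) (p : Plane) : Strategy := fun l =>
  if Kn l = ∅ then Sum.inl (line0 p)
  else if h : ∃ x : Plane × Plane, Pair ω l x.1 x.2 then
    Sum.inl (lineOf h.choose.1 h.choose.2 h.choose_spec.2.2.1)
  else if h : ∃ P : ConvexPolygon, (P.verts : Set Plane) = Kn l then Sum.inr h.choose
  else Sum.inl (line0 p)

lemma strat_spec (ω : ℝ) (p : Plane) (l : List Answer) :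
    (Kn l = ∅ ∧ strat ω p l = Sum.inl (line0 p)) ∨
    ((Kn l).Nonempty ∧ ∃ w v, Pair ω l w v ∧ ∃ h, strat ω p l = Sum.inl (lineOf w v h)) ∨
    ((Kn l).Nonempty ∧ (∀ w v, ¬ Pair ω l w v) ∧
      ∃ P : ConvexPolygon, (P.verts : Set Plane) = Kn l ∧ strat ω p l = Sum.inr P) ∨
    ((Kn l).Nonempty ∧ (∀ w v, ¬ Pair ω l w v) ∧
      (¬ ∃ P : ConvexPolygon, (P.verts : Set Plane) = Kn l) ∧ ∃ L, strat ω p l = Sum.inl L) := by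
  by_cases h1 : Kn l = ∅
  · left; exact ⟨h1, by simp [strat, h1]⟩
  right
  have hne := Set.nonempty_iff_ne_empty.2 h1
  by_cases h2 : ∃ x : Plane × Plane, Pair ω l x.1 x.2
  · left
    refine ⟨hne, h2.choose.1, h2.choose.2, h2.choose_spec, h2.choose_spec.2.2.1, ?_⟩
    rw [strat, if_neg h1, dif_pos h2]
  right
  have h2' : ∀ w v, ¬ Pair ω l w v := fun w v h => h2 ⟨(w, v), h⟩
  by_cases h3 : ∃ P : ConvexPolygon, (P.verts : Set Plane) = Kn l
  · left
    refine ⟨hne, h2', h3.choose, h3.choose_spec, ?_⟩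
    rw [strat, if_neg h1, dif_neg h2, dif_pos h3]
  · right
    refine ⟨hne, h2', h3, line0 p, ?_⟩
    rw [strat, if_neg h1, dif_neg h2, dif_neg h3]

lemma conf_sound {ω : ℝ} {O : ConvexPolygon} {o : Outcome} (F : Facts ω O o) {a b : Plane}
    (h : Conf1 ω o a b) : ∀ x ∈ O.body, 0 ≤ cr (b - a) (x - a) := by
  intro x hx
  have h1 := F.left x hx
  have h2 := F.right x hx
  obtain ⟨-, s, t, hst, ⟨rfl, rfl⟩ | ⟨rfl, rfl⟩⟩ := h
  · have e1 : o.apex + t • o.dir - (o.apex + s • o.dir) = (t - s) • o.dir := by module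
    have e2 : x - (o.apex + s • o.dir) = (x - o.apex) - s • o.dir := by module
    rw [e1, e2, cr_smul_left, cr_sub_right, cr_smul_right, cr_self]
    have := mul_nonneg (sub_nonneg.2 hst.le) h1
    linarith
  · have e1 : o.apex + s • rot ω o.dir - (o.apex + t • rot ω o.dir) = (s - t) • rot ω o.dir := by
      module
    have e2 : x - (o.apex + t • rot ω o.dir) = (x - o.apex) - t • rot ω o.dir := by module
    rw [e1, e2, cr_smul_left, cr_sub_right, cr_smul_right, cr_self]
    have := mul_nonneg_of_nonpos_of_nonpos (sub_nonpos.2 hst.le) h2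
    linarith

lemma succ_unique (O : ConvexPolygon) {w v v' : Plane} (hw : w ∈ O.verts) (hv : v ∈ O.verts)
    (hv' : v' ∈ O.verts) (h1 : w ≠ v) (h2 : w ≠ v') (h3 : 0 ≤ cr (v - w) (v' - w))
    (h4 : 0 ≤ cr (v' - w) (v - w)) : v = v' := by
  by_contra hne
  apply no_three_s13 O hw hv hv' h1 h2 hne
  rw [cr_swap] at h4
  linarith

lemma tri {ω : ℝ} (h0 : 0 < ω) (h1 : ω ≤ Real.pi / 2) {O : ConvexPolygon} {o : Outcome}
    (F : Facts ω O o) {w v : Plane} {hne : w ≠ v} (h : IsOutcome ω O (lineOf w v hne) o) :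
    (Conf1 ω o w v ∧ 0 < cr (v - w) (o.p₂ - w)) ∨
    (Conf1 ω o v w ∧ cr (v - w) (o.p₁ - w) < 0) ∨
    (cr (v - w) (o.p₁ - w) < 0 ∧ 0 < cr (v - w) (o.p₂ - w)) := by
  have hs := sin_pos' h0 h1
  obtain ⟨⟨-, ⟨τ, hτ⟩, t, ht, htb⟩, -, -⟩ := h
  simp only [lineOf] at hτ htb
  set N := ‖v - w‖ with hN
  have hNp : 0 < N := norm_pos_iff.2 (sub_ne_zero.2 hne.symm)
  set u : Plane := N⁻¹ • (v - w) with hu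
  have hvw : v - w = N • u := by rw [hu, smul_smul, mul_inv_cancel₀ hNp.ne', one_smul]
  have hu0 : u ≠ 0 := by
    intro h; rw [h, smul_zero] at hvw; exact hne (sub_eq_zero.1 hvw).symm
  have ht' : 0 < t := by
    rcases ht.lt_or_eq with h | h
    · exact h
    · rw [← h, zero_smul, add_zero] at htb; exact absurd htb F.apex_notMem
  set q := o.apex with hq
  set d := o.dir with hd
  set e := rot ω o.dir with he
  have hde : cr d e = Real.sin ω := cr_rot F.unit ω
  have hdu : 0 ≤ cr d u := by
    have := F.left _ htb
    rw [← hq, ← hd, add_sub_cancel_left, cr_smul_right] at this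
    exact nonneg_of_mul_nonneg_right this ht'
  have heu : cr e u ≤ 0 := by
    have := F.right _ htb
    rw [← hq, ← he, add_sub_cancel_left, cr_smul_right] at this
    by_contra hh
    push Not at hh
    linarith [mul_pos ht' hh]
  have hwq : w = q + (-τ) • u := by rw [hτ]; module
  have hvq : v = q + (N - τ) • u := by
    have : v = w + N • u := by rw [← hvw]; abel
    rw [this, hτ]; module
  obtain ⟨r1, hr1, hp1⟩ := F.r1
  obtain ⟨r2, hr2, hp2⟩ := F.r2
  have c1 : cr (v - w) (o.p₁ - w) = - (N * r1 * cr d u) := by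
    have : o.p₁ - w = r1 • d + τ • u := by rw [hp1, ← hq, hτ]; module
    rw [this, hvw, cr_smul_left, cr_add_right, cr_smul_right, cr_smul_right, cr_self, cr_swap u d]
    ring
  have c2 : cr (v - w) (o.p₂ - w) = - (N * r2 * cr e u) := by
    have : o.p₂ - w = r2 • e + τ • u := by rw [hp2, ← hq, hτ]; module
    rw [this, hvw, cr_smul_left, cr_add_right, cr_smul_right, cr_smul_right, cr_self, cr_swap u e]
    ring
  have n1 : 0 < cr d u → cr (v - w) (o.p₁ - w) < 0 := by
    intro h; rw [c1]; have := mul_pos (mul_pos hNp hr1) h; linarith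
  have n2 : cr e u < 0 → 0 < cr (v - w) (o.p₂ - w) := by
    intro h; rw [c2]; have := mul_neg_of_pos_of_neg (mul_pos hNp hr2) h; linarith
  have hd0 : d ≠ 0 := by
    intro h; rw [h] at hde; simp [cr] at hde; linarith
  have he0 : e ≠ 0 := by
    intro h; rw [h] at hde; simp [cr] at hde; linarith
  rcases hdu.lt_or_eq with h | h
  · rcases heu.lt_or_eq with h' | h'
    · exact Or.inr (Or.inr ⟨n1 h, n2 h'⟩)
    · right; left
      refine ⟨⟨hne.symm, ?_⟩, n1 h⟩
      obtain ⟨k, hk⟩ := sub_of_cr_zero he0 h'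
      have hk0 : 0 < k := by
        rw [hk, cr_smul_right, hde] at h
        by_contra hh; nlinarith
      refine ⟨-τ * k, (N - τ) * k, by nlinarith, Or.inr ⟨?_, ?_⟩⟩
      · rw [hvq, hk, smul_smul]
      · rw [hwq, hk, smul_smul]
  · left
    obtain ⟨k, hk⟩ := sub_of_cr_zero hd0 h.symm
    have heuk : cr e u = - (k * Real.sin ω) := by
      rw [hk, cr_smul_right, cr_swap, hde]; ring
    have hk1 : k ≠ 0 := by rintro rfl; rw [zero_smul] at hk; exact hu0 hk
    have hk0 : 0 < k := by
      rw [heuk] at heu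
      rcases lt_or_gt_of_ne hk1 with h | h
      · nlinarith
      · exact h
    refine ⟨⟨hne, -τ * k, (N - τ) * k, by nlinarith, Or.inl ⟨?_, ?_⟩⟩, n2 ?_⟩
    · rw [hwq, hk, smul_smul]
    · rw [hvq, hk, smul_smul]
    · rw [heuk]; have := mul_pos hk0 hs; linarith

/-- The invariant of a play. -/
structure PlayInv (ω : ℝ) (O : ConvexPolygon) (l : List Answer) : Prop where
  facts : ∀ o, some o ∈ l → Facts ω O o
  two : 1 ≤ l.length → ∃ a ∈ Kn l, ∃ b ∈ Kn l, a ≠ b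
  count : 2 ≤ l.length → 3 ≤ (Kn l).ncard ∧ l.length + 2 ≤ (Kn l).ncard + (Cn ω l).ncard

lemma PlayInv.sub {ω : ℝ} {O : ConvexPolygon} {l : List Answer} (I : PlayInv ω O l) :
    Kn l ⊆ O.verts := by
  rintro x ⟨o, ho, rfl | rfl⟩
  · exact (I.facts o ho).v1
  · exact (I.facts o ho).v2

lemma PlayInv.edge {ω : ℝ} {O : ConvexPolygon} {l : List Answer} (I : PlayInv ω O l) {a b : Plane}
    (h : Conf ω l a b) : ∀ x ∈ O.body, 0 ≤ cr (b - a) (x - a) := by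
  obtain ⟨o, ho, hc⟩ := h
  exact conf_sound (I.facts o ho) hc

lemma PlayInv.done {ω : ℝ} {O : ConvexPolygon} {l : List Answer} (I : PlayInv ω O l)
    (hl : 1 ≤ l.length) (h : ∀ w v, ¬ Pair ω l w v) : Kn l = O.verts := by
  refine all_of_edges O I.sub (I.two hl) ?_
  intro w hw v hv hwv hleft k hk
  have : Conf ω l w v := by
    by_contra hc
    exact h w v ⟨hw, hv, hwv, hleft, hc⟩
  exact I.edge this k (vert_mem O hk)

lemma length_pos_of_Kn {l : List Answer} (h : (Kn l).Nonempty) : 1 ≤ l.length := by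
  obtain ⟨x, o, ho, -⟩ := h
  exact List.length_pos_of_mem ho

lemma PlayInv.step {ω : ℝ} (h0 : 0 < ω) (h1 : ω ≤ Real.pi / 2) {p : Plane} {O : ConvexPolygon}
    (hp : p ∈ O.body) (hO : ∀ v ∈ O.verts, ω < O.intAngle v) {l : List Answer} {a : Answer}
    (I : PlayInv ω O l) {L : DirLine} (hL : strat ω p l = Sum.inl L) (ha : ValidAnswer ω O L a) :
    PlayInv ω O (l ++ [a]) := by
  have hs := sin_pos' h0 h1
  have hsome : L.pt ∈ O.body → ∃ o, a = some o ∧ IsOutcome ω O L o := by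
    intro hpt
    cases a with
    | none => exact absurd (exists_probe h0 h1 O L hpt) ha
    | some o => exact ⟨o, rfl, ha⟩
  have hfacts : ∀ o, IsOutcome ω O L o → ∀ o', some o' ∈ l ++ [some o] → Facts ω O o' := by
    intro o ho o' ho'
    rcases List.mem_append.1 ho' with h | h
    · exact I.facts o' h
    · simp at h
      rw [h]; exact _root_.facts h0 h1 hO ho
  have hK : ∀ o, Kn (l ++ [some o]) = Kn l ∪ {o.p₁, o.p₂} := by
    intro o
    ext x
    constructor
    · rintro ⟨o', ho', hx⟩
      rcases List.mem_append.1 ho' with h | h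
      · exact Or.inl ⟨o', h, hx⟩
      · simp at h
        subst h
        exact Or.inr hx
    · rintro (⟨o', ho', hx⟩ | hx)
      · exact ⟨o', List.mem_append_left _ ho', hx⟩
      · exact ⟨o, by simp, hx⟩
  have htwo : ∀ o, IsOutcome ω O L o → ∃ a ∈ Kn (l ++ [some o]), ∃ b ∈ Kn (l ++ [some o]),
      a ≠ b := by
    intro o ho
    have F := _root_.facts h0 h1 hO ho
    refine ⟨o.p₁, by rw [hK]; simp, o.p₂, by rw [hK]; simp, ?_⟩
    intro heq
    obtain ⟨r1, hr1, hp1⟩ := F.r1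
    obtain ⟨r2, hr2, hp2⟩ := F.r2
    rw [hp1, hp2] at heq
    have h := congrArg (cr o.dir) (add_left_cancel heq)
    rw [cr_smul_right, cr_smul_right, cr_self, cr_rot F.unit] at h
    have := mul_pos hr2 hs
    linarith
  rcases strat_spec ω p l with ⟨hKe, hS⟩ | ⟨hne, w, v, hP, hwv, hS⟩ | ⟨hne, hnp, P, hPv, hS⟩ |
    ⟨hne, hnp, hnP, L', hS⟩
  · have hLe : L = line0 p := by rw [hS] at hL; exact (Sum.inl.inj hL).symm
    obtain ⟨o, rfl, ho⟩ := hsome (by rw [hLe]; exact hp)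
    have hl : l.length = 0 := by
      by_contra hl
      obtain ⟨x, hx, -⟩ := I.two (by omega)
      rw [hKe] at hx; exact hx
    refine ⟨hfacts o ho, fun _ => htwo o ho, fun h => ?_⟩
    rw [List.length_append, hl] at h
    simp at h
  · have hLe : L = lineOf w v hwv := by rw [hS] at hL; exact (Sum.inl.inj hL).symm
    obtain ⟨hw, hv, -, hleft, hnc⟩ := hP
    have hwO := I.sub hw
    have hvO := I.sub hv
    obtain ⟨o, rfl, ho⟩ := hsome (by rw [hLe]; exact vert_mem O hwO)
    have F := _root_.facts h0 h1 hO ho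
    refine ⟨hfacts o ho, fun _ => htwo o ho, fun _ => ?_⟩
    have hl1 := length_pos_of_Kn hne
    rw [hLe] at ho
    have T := tri h0 h1 F ho
    set l' := l ++ [some o] with hl'
    have hlen : l'.length = l.length + 1 := by simp [hl']
    have hKsub : Kn l ⊆ Kn l' := by rw [hl', hK]; exact Set.subset_union_left
    have hK'O : Kn l' ⊆ O.verts := by
      rw [hl', hK]
      rintro x (hx | rfl | rfl)
      · exact I.sub hx
      · exact F.v1
      · exact F.v2
    have hKfin : (Kn l').Finite := O.verts.finite_toSet.subset hK'O
    have hCfin : (Cn ω l').Finite := hKfin.subset (fun x hx => hx.1)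
    have hp1 : o.p₁ ∈ Kn l' := by rw [hl', hK]; simp
    have hp2 : o.p₂ ∈ Kn l' := by rw [hl', hK]; simp
    have hcmono : ∀ a b, Conf ω l a b → Conf ω l' a b := by
      rintro a b ⟨o', ho', hc⟩
      exact ⟨o', List.mem_append_left _ ho', hc⟩
    have hCsub : Cn ω l ⊆ Cn ω l' := by
      rintro x ⟨hx, b, hb, hc⟩
      exact ⟨hKsub hx, b, hKsub hb, hcmono _ _ hc⟩
    have hcnew : ∀ a b, Conf1 ω o a b → Conf ω l' a b := fun a b h => ⟨o, by simp [hl'], h⟩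
    have hoff : ∀ x, cr (v - w) (x - w) ≠ 0 → x ≠ w ∧ x ≠ v := by
      intro x hx
      constructor
      · rintro rfl; apply hx; simp [cr]
      · rintro rfl; apply hx; exact cr_self _
    have hthree : ∀ x ∈ Kn l', cr (v - w) (x - w) ≠ 0 → 3 ≤ (Kn l').ncard := by
      intro x hx hc
      have := hoff x hc
      exact (Set.two_lt_ncard_iff hKfin).2 ⟨w, v, x, hKsub hw, hKsub hv, hx, hwv, this.1.symm,
        this.2.symm⟩
    rw [hlen]
    rcases Nat.lt_or_ge l.length 2 with hl2 | hl2
    · -- second query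
      have hl1' : l.length = 1 := by omega
      rw [hl1']
      rcases T with ⟨hc, hx⟩ | ⟨hc, hx⟩ | ⟨hx1, hx2⟩
      · have h3 := hthree _ hp2 hx.ne'
        have : 0 < (Cn ω l').ncard :=
          (Set.ncard_pos hCfin).2 ⟨w, hKsub hw, v, hKsub hv, hcnew _ _ hc⟩
        omega
      · have h3 := hthree _ hp1 hx.ne
        have : 0 < (Cn ω l').ncard :=
          (Set.ncard_pos hCfin).2 ⟨v, hKsub hv, w, hKsub hw, hcnew _ _ hc⟩
        omega
      · have o1 := hoff _ hx1.ne
        have o2 := hoff _ hx2.ne'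
        have o3 : o.p₁ ≠ o.p₂ := by intro h; rw [h] at hx1; linarith
        have h4 : 4 ≤ (Kn l').ncard := by
          have hsub4 : ({o.p₁, o.p₂, w, v} : Set Plane) ⊆ Kn l' := by
            rintro x (rfl | rfl | rfl | rfl)
            · exact hp1
            · exact hp2
            · exact hKsub hw
            · exact hKsub hv
          have hle := Set.ncard_le_ncard hsub4 hKfin
          rw [Set.ncard_insert_of_notMem (by simp [o1.1, o1.2, o3]),
            Set.ncard_insert_of_notMem (by simp [o2.1, o2.2]), Set.ncard_pair hwv] at hle
          exact hle
        omega
    · obtain ⟨hI3, hIc⟩ := I.count hl2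
      have hKle := Set.ncard_le_ncard hKsub hKfin
      have hCle := Set.ncard_le_ncard hCsub hCfin
      have hright : cr (v - w) (o.p₁ - w) < 0 → (Kn l).ncard + 1 ≤ (Kn l').ncard := by
        intro hx
        apply Set.ncard_lt_ncard _ hKfin
        refine ⟨hKsub, fun hsub => ?_⟩
        have := hleft _ (hsub hp1)
        linarith
      rcases T with ⟨hc, hx⟩ | ⟨hc, hx⟩ | ⟨hx1, hx2⟩
      · have : (Cn ω l).ncard + 1 ≤ (Cn ω l').ncard := by
          apply Set.ncard_lt_ncard _ hCfin
          refine ⟨hCsub, fun hsub => ?_⟩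
          obtain ⟨-, b, hb, hcb⟩ := hsub ⟨hKsub hw, v, hKsub hv, hcnew _ _ hc⟩
          have hbO := I.sub hb
          have hwb : w ≠ b := by obtain ⟨_, _, h⟩ := hcb; exact h.1
          have : v = b := succ_unique O hwO hvO hbO hwv hwb (hleft b hb)
            (I.edge hcb v (vert_mem O hvO))
          rw [← this] at hcb
          exact hnc hcb
        omega
      · exact ⟨by omega, by have := hright hx; omega⟩
      · exact ⟨by omega, by have := hright hx1; omega⟩
  · rw [hS] at hL; cases hL
  · exact absurd ⟨O, (I.done (length_pos_of_Kn hne) hnp).symm⟩ hnP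

lemma PlayInv.of_consistent {ω : ℝ} (h0 : 0 < ω) (h1 : ω ≤ Real.pi / 2) {p : Plane}
    {O : ConvexPolygon} (hp : p ∈ O.body) (hO : ∀ v ∈ O.verts, ω < O.intAngle v)
    (l : List Answer) (h : Consistent ω (strat ω p) O l) : PlayInv ω O l := by
  induction l using List.reverseRecOn with
  | nil => exact ⟨by simp, by simp, by simp⟩
  | append_singleton l a ih =>
    have hl : Consistent ω (strat ω p) O l := by
      intro i hi
      obtain ⟨L, hL, hv⟩ := h i (by simp; omega)
      refine ⟨L, ?_, ?_⟩
      · rwa [List.take_append_of_le_length hi.le] at hL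
      · simpa [List.getElem_append_left hi] using hv
    obtain ⟨L, hL, hv⟩ := h l.length (by simp)
    refine (ih hl).step h0 h1 hp hO (L := L) ?_ ?_
    · simpa using hL
    · simpa using hv

/-- there is a strategy reconstructing every convex polygon without narrow
vertices, contained in `Ψ` and containing `p`, using at most `2n - 2` probes. -/
theorem reconstruct_no_narrow (ω : ℝ) (hω₀ : 0 < ω) (hω : ω ≤ Real.pi / 2)
    (c : Plane) (r : ℝ) (hr : 0 < r) (p : Plane) :
    ∃ S : Strategy, ∀ O : ConvexPolygon,
      p ∈ O.body → O.body ⊆ Metric.closedBall c r →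
      (∀ v ∈ O.verts, ω < O.intAngle v) →
      Reconstructs ω S O (2 * O.verts.card - 2) := by
  refine ⟨strat ω p, fun O hp _ hO => ⟨?_, ?_⟩⟩
  · intro l hl P hP
    have I := PlayInv.of_consistent hω₀ hω hp hO l hl
    rcases strat_spec ω p l with ⟨hKe, hS⟩ | ⟨hne, w, v, hP, hwv, hS⟩ |
      ⟨hne, hnp, P', hPv, hS⟩ | ⟨hne, hnp, hnP, L', hS⟩
    · rw [hS] at hP; cases hP
    · rename_i hP'
      rw [hS] at hP'; cases hP'
    · rw [hS] at hP
      have : P' = P := Sum.inr.inj hP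
      subst this
      rw [I.done (length_pos_of_Kn hne) hnp] at hPv
      exact_mod_cast hPv
    · rw [hS] at hP; cases hP
  · intro l hl hlen
    have I := PlayInv.of_consistent hω₀ hω hp hO l hl
    have h3 := O.three_le_card
    obtain ⟨hc3, hc⟩ := I.count (by omega)
    have hfin : (Kn l).Finite := O.verts.finite_toSet.subset I.sub
    have hCK : Cn ω l ⊆ Kn l := fun x hx => hx.1
    have hKle : (Kn l).ncard ≤ O.verts.card := by
      rw [← Set.ncard_coe_finset]; exact Set.ncard_le_ncard I.sub O.verts.finite_toSet
    have hCle := Set.ncard_le_ncard hCK hfin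
    have hCeq : Cn ω l = Kn l := Set.eq_of_subset_of_ncard_le hCK (by omega) hfin
    have hKeq : Kn l = O.verts := Set.eq_of_subset_of_ncard_le I.sub
      (by rw [Set.ncard_coe_finset]; omega) O.verts.finite_toSet
    rcases strat_spec ω p l with ⟨hKe, hS⟩ | ⟨hne, w, v, hP, hwv, hS⟩ |
      ⟨hne, hnp, P', hPv, hS⟩ | ⟨hne, hnp, hnP, L', hS⟩
    · rw [hKe] at hc3; simp at hc3
    · exfalso
      obtain ⟨hw, hv, -, hleft, hnc⟩ := hP
      have hwC : w ∈ Cn ω l := by rw [hCeq]; exact hw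
      obtain ⟨-, b, hb, hcb⟩ := hwC
      have hwb : w ≠ b := by obtain ⟨_, _, h⟩ := hcb; exact h.1
      have : v = b := succ_unique O (I.sub hw) (I.sub hv) (I.sub hb) hwv hwb (hleft b hb)
        (I.edge hcb v (vert_mem O (I.sub hv)))
      rw [← this] at hcb
      exact hnc hcb
    · exact ⟨P', hS⟩
    · exact absurd ⟨O, hKeq.symm⟩ hnP

end
end
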